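/- arXiv:1907.10563 — 2 statements merged into one kernel-verified Lean document; each statement's English description precedes it below -/
import Mathlib

section
/- Let 0 < p < ∞ and let ω be a radial weight. Then there exists a constant C = C(p) > 0 such that C^{-1} ‖f‖_{A^p_ω} ≤ ‖N(Re f)‖_{L^p_ω} ≤ C ‖f‖_{A^p_ω} for every analytic function f on the unit disc 𝔻 with Im f(0) = 0. -/
/-!
The two inequalities hold on every circle `|ζ| = r`, with constants depending only on `p`; the
weight enters only through integration in `r`. After the dilation `z ↦ f (r z)` the function is
analytic on a neighbourhood of the closed unit disc and the Stolz regions with vertex on `|ζ| = r`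
become the cones `{ρ e^{iφ} : |θ - φ| < (1 - ρ) / 2}` at points `e^{iθ}` of the unit circle. Because
arguments are principal, these cones do not cross the negative real axis.

**Control of `f` by the maximal function of `Re f`** (`lower_bound_circle`). This is the
theorem of Burkholder, Gundy and Silverstein, through a distributional inequality
(`good_lambda`). Given a height `l`, let `A` be the set of angles `θ` at which the maximal
function is at most `l` at both `θ` and `-θ`. Over the Lipschitz curve
`exp (-h θ + i θ)`, `h = 8 dist(θ, A)`, the real part of `f` is bounded by `l`, since the curve stays
inside the cones at points of `A`. Symmetrizing `A` makes `h (-π) = h π`, which closes the curve even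
though the cones do not wrap around `-1`. Cauchy's theorem along the curve (`cauchy_sawtooth`),
applied to `f ^ (4 j + 2)`, and the elementary inequality `im_pow_le` bound the integral of
`|Im f| ^ (4 j + 2)` by that of `|Re f| ^ (4 j + 2)`. Chebyshev's inequality and integration in
`l` give the `L^p` bound for every `p < 4 j + 2`.

**Control of the maximal function by `f`** (`upper_bound_circle`). For `q = p / 2` the function
`|f| ^ q` is bounded by the Poisson integral of its boundary values. For polynomials this follows
by replacing each zero in the disc by its reflected factor and taking a holomorphic power; the
general case is a limit of Taylor polynomials. The Poisson kernel at a point of the cone at `θ` is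
bounded by a radially decreasing kernel, hence the Poisson integral by the Hardy–Littlewood maximal
function, which is bounded on `L^2`.

The passage from circles to the disc uses polar coordinates; since the integrals in the statement
are Bochner integrals, equal to zero when divergent, the comparison is carried out
for lower Lebesgue integrals, and shows that the two integrals are finite simultaneously.
-/

open MeasureTheory Set

/-- Tail integral `ω̂(r) = ∫_r^1 ω(s) ds`. -/
noncomputable def tailInt (ω : ℝ → ℝ) (r : ℝ) : ℝ := ∫ s in r..1, ω s

/-- A radial weight: nonnegative, integrable on `[0,1)`, with positive tails. -/
def RadialWeight (ω : ℝ → ℝ) : Prop :=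
  (∀ r ∈ Set.Ico (0:ℝ) 1, 0 ≤ ω r) ∧ MeasureTheory.IntegrableOn ω (Set.Ico 0 1) ∧
    ∀ r ∈ Set.Ico (0:ℝ) 1, 0 < tailInt ω r

/-- The class `D̂` of upper doubling weights. -/
def Dhat (ω : ℝ → ℝ) : Prop :=
  ∃ C : ℝ, 1 ≤ C ∧ ∀ r ∈ Set.Ico (0:ℝ) 1, tailInt ω r ≤ C * tailInt ω ((1 + r) / 2)

/-- The class `Ď`. -/
def Dcheck (ω : ℝ → ℝ) : Prop :=
  ∃ K C : ℝ, 1 < K ∧ 1 < C ∧ ∀ r ∈ Set.Ico (0:ℝ) 1,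
    C * tailInt ω (1 - (1 - r) / K) ≤ tailInt ω r

/-- The associated weight `ω̃(r) = ω̂(r)/(1-r)`. -/
noncomputable def assocW (ω : ℝ → ℝ) (r : ℝ) : ℝ := tailInt ω r / (1 - r)

/-- `‖f‖_{A^p_ω}^p = ∫_𝔻 |f|^p ω dA`, with `dA` the normalized area measure. -/
noncomputable def ApNorm (p : ℝ) (ω : ℝ → ℝ) (f : ℂ → ℂ) : ℝ :=
  Real.pi⁻¹ * ∫ z in Metric.ball (0:ℂ) 1, ‖f z‖ ^ p * ω ‖z‖

/-- `‖Re f‖_{L^p_ω}^p = ∫_𝔻 |Re f|^p ω dA`. -/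
noncomputable def LpReNorm (p : ℝ) (ω : ℝ → ℝ) (f : ℂ → ℂ) : ℝ :=
  Real.pi⁻¹ * ∫ z in Metric.ball (0:ℂ) 1, |(f z).re| ^ p * ω ‖z‖

/-- `M_p^p(s, Re f)`, the `p`-th power of the `p`-mean of `Re f` on the circle of radius `s`. -/
noncomputable def Mpp (p : ℝ) (f : ℂ → ℂ) (s : ℝ) : ℝ :=
  (2 * Real.pi)⁻¹ * ∫ θ in (0:ℝ)..(2 * Real.pi),
    |(f ((s : ℂ) * Complex.exp ((θ : ℂ) * Complex.I))).re| ^ p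

/-- `sup_{0<s<r} M_p^p(s, Re f)`. -/
noncomputable def supMpp (p : ℝ) (f : ℂ → ℂ) (r : ℝ) : ℝ :=
  sSup ((fun s => Mpp p f s) '' Set.Ioo (0:ℝ) r)

/-- The Stolz-type region `Γ(u) = {z ∈ 𝔻 : |arg u − arg z| < (1/2)(1 − |z|/|u|)}`. -/
def Stolz (u : ℂ) : Set ℂ :=
  {z : ℂ | ‖z‖ < 1 ∧ |Complex.arg u - Complex.arg z| < (1 / 2) * (1 - ‖z‖ / ‖u‖)}

/-- Nontangential maximal function `N(v)(ζ) = sup_{z ∈ Γ(ζ)} |v(z)|`. -/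
noncomputable def Ntang (v : ℂ → ℝ) (ζ : ℂ) : ℝ := sSup ((fun z => |v z|) '' Stolz ζ)

/-- `‖N(Re f)‖_{L^p_ω}^p`. -/
noncomputable def NpNorm (p : ℝ) (ω : ℝ → ℝ) (f : ℂ → ℂ) : ℝ :=
  Real.pi⁻¹ * ∫ z in Metric.ball (0:ℂ) 1, (Ntang (fun w => (f w).re) z) ^ p * ω ‖z‖

/-! ### The Cauchy theorem on sawtooth curves -/

/-- The real part of `∮ G(z) / (i z) dz = 2 π G(0)` along the closed Lipschitz curve
`θ ↦ exp (-h θ + i θ)`. The quotient `(G - G 0) / z` has a primitive on the ball, whose composition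
with the curve is Lipschitz and so satisfies the fundamental theorem of calculus. -/
lemma cauchy_sawtooth {R : ℝ} (hR : 1 < R) {G : ℂ → ℂ}
    (hG : DifferentiableOn ℂ G (Metric.ball (0:ℂ) R)) (hG0 : (G 0).im = 0)
    {K : NNReal} {h : ℝ → ℝ} (hL : LipschitzWith K h) (h0 : ∀ θ, 0 ≤ h θ)
    (hper : h (-Real.pi) = h Real.pi) :
    ∫ θ in (-Real.pi)..Real.pi,
      ((G (Complex.exp (-(h θ : ℂ) + θ * Complex.I))).re
        - deriv h θ * (G (Complex.exp (-(h θ : ℂ) + θ * Complex.I))).im)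
      = 2 * Real.pi * (G 0).re := by
  have hR0 : 0 < R := by linarith
  have hmem : Metric.ball (0:ℂ) R ∈ nhds (0:ℂ) := Metric.ball_mem_nhds _ hR0
  have hH : DifferentiableOn ℂ (dslope G 0) (Metric.ball (0:ℂ) R) :=
    (Complex.differentiableOn_dslope hmem).2 hG
  obtain ⟨P, hP⟩ := hH.isExactOn_ball
  set z : ℝ → ℂ := fun θ => Complex.exp (-(h θ : ℂ) + θ * Complex.I) with hz
  have hznorm : ∀ θ, ‖z θ‖ ≤ 1 := by
    intro θ
    simp [hz, Complex.norm_exp, h0 θ]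
  have hzball : ∀ θ, z θ ∈ Metric.ball (0:ℂ) R := fun θ => by
    simpa using lt_of_le_of_lt (hznorm θ) hR
  -- the curve is Lipschitz, because `exp` is `1`-Lipschitz on the left half plane
  have hwL : LipschitzWith (K + 1) (fun θ : ℝ => (-(h θ : ℂ) + θ * Complex.I)) := by
    refine LipschitzWith.add ?_ ?_
    · refine LipschitzWith.of_dist_le_mul fun x y => ?_
      have := hL.dist_le_mul x y
      rw [dist_neg_neg, Complex.dist_of_im_eq (by simp)]
      simpa using this
    · refine LipschitzWith.of_dist_le_mul fun x y => ?_
      rw [dist_eq_norm, ← sub_mul, ← Complex.ofReal_sub]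
      simp [Real.dist_eq, -Complex.ofReal_sub]
  have hexp : LipschitzOnWith 1 Complex.exp {w : ℂ | w.re ≤ 0} := by
    refine Convex.lipschitzOnWith_of_nnnorm_deriv_le (𝕜 := ℂ)
      (fun x _ => Complex.differentiableAt_exp) ?_ (convex_halfSpace_re_le 0)
    intro x hx
    rw [Complex.deriv_exp, ← NNReal.coe_le_coe, coe_nnnorm, Complex.norm_exp]
    simpa using hx
  have hzL : LipschitzWith (1 * (K + 1)) z := by
    rw [← lipschitzOnWith_univ]
    refine hexp.comp (lipschitzOnWith_univ.2 hwL) ?_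
    intro θ _
    simp [h0 θ]
  -- the primitive is Lipschitz on the closed unit disc
  obtain ⟨M, hM⟩ : ∃ M, ∀ w ∈ Metric.closedBall (0:ℂ) 1, ‖dslope G 0 w‖ ≤ M :=
    (isCompact_closedBall (0:ℂ) 1).exists_bound_of_continuousOn
      (hH.continuousOn.mono (Metric.closedBall_subset_ball hR))
  have hPL : LipschitzOnWith M.toNNReal P (Metric.closedBall (0:ℂ) 1) := by
    refine Convex.lipschitzOnWith_of_nnnorm_hasDerivWithin_le (𝕜 := ℂ) (convex_closedBall 0 1)
      (fun x hx => (hP x (Metric.closedBall_subset_ball hR hx)).hasDerivWithinAt) ?_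
    intro x hx
    rw [← NNReal.coe_le_coe, coe_nnnorm]
    exact (hM x hx).trans (Real.le_coe_toNNReal M)
  have hΦL : LipschitzWith (1 * (M.toNNReal * (1 * (K + 1)))) (fun θ => (P (z θ)).im) := by
    have h1 : LipschitzWith (M.toNNReal * (1 * (K + 1))) (fun θ => P (z θ)) := by
      rw [← lipschitzOnWith_univ]
      refine hPL.comp (lipschitzOnWith_univ.2 hzL) ?_
      intro θ _
      simpa using hznorm θ
    have h2 : LipschitzWith 1 Complex.im := by
      refine LipschitzWith.of_dist_le_mul fun x y => ?_
      rw [Real.dist_eq, ← Complex.sub_im, dist_eq_norm]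
      simpa using Complex.abs_im_le_norm (x - y)
    exact h2.comp h1
  have hac : AbsolutelyContinuousOnInterval (fun θ => (P (z θ)).im) (-Real.pi) Real.pi :=
    (hΦL.lipschitzOnWith).absolutelyContinuousOnInterval
  have hFTC := hac.integral_deriv_eq_sub
  have hend : z Real.pi = z (-Real.pi) := by
    simp only [hz, hper, Complex.exp_add]
    congr 1
    simp [Complex.exp_pi_mul_I, Complex.exp_neg]
  simp only [hend, sub_self] at hFTC
  have hderiv : ∀ᵐ θ : ℝ, deriv (fun θ => (P (z θ)).im) θ
      = ((G (z θ)).re - deriv h θ * (G (z θ)).im) - (G 0).re := by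
    filter_upwards [hL.ae_differentiableAt] with θ hθ
    have hd : HasDerivAt (fun θ : ℝ => (-(h θ : ℂ) + θ * Complex.I))
        (-((deriv h θ : ℝ) : ℂ) + 1 * Complex.I) θ :=
      (hθ.hasDerivAt.ofReal_comp.neg).add ((hasDerivAt_id θ).ofReal_comp.mul_const Complex.I)
    have hd2 := (hP (z θ) (hzball θ)).comp θ hd.cexp
    have hslope : dslope G 0 (z θ) = (G (z θ) - G 0) / z θ := by
      rw [dslope_of_ne _ (Complex.exp_ne_zero _), slope_def_field, sub_zero]
    have hd3 : HasDerivAt (fun θ => P (z θ))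
        ((G (z θ) - G 0) * (-((deriv h θ : ℝ) : ℂ) + 1 * Complex.I)) θ := by
      have hz0 : z θ ≠ 0 := Complex.exp_ne_zero _
      have e : (G (z θ) - G 0) * (-((deriv h θ : ℝ) : ℂ) + 1 * Complex.I)
          = dslope G 0 (z θ) * (z θ * (-((deriv h θ : ℝ) : ℂ) + 1 * Complex.I)) := by
        rw [hslope]
        field_simp
      rw [e]
      exact hd2
    have hd4 := (Complex.imCLM.hasFDerivAt.comp_hasDerivAt θ hd3).deriv
    have e : (⇑Complex.imCLM ∘ fun θ => P (z θ)) = fun θ => (P (z θ)).im := rfl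
    rw [e] at hd4
    rw [hd4]
    simp [hG0]
    ring
  rw [intervalIntegral.integral_congr_ae (hderiv.mono fun x hx _ => hx)] at hFTC
  have hGz : Continuous fun θ => G (z θ) :=
    hG.continuousOn.comp_continuous hzL.continuous hzball
  have hint1 : IntervalIntegrable (fun θ => (G (z θ)).re) volume (-Real.pi) Real.pi :=
    (Complex.continuous_re.comp hGz).intervalIntegrable _ _
  have hint2 : IntervalIntegrable (fun θ => deriv h θ * (G (z θ)).im) volume
      (-Real.pi) Real.pi := by
    refine IntervalIntegrable.mul_continuousOn ?_ (Complex.continuous_im.comp hGz).continuousOn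
    exact (hL.lipschitzOnWith.absolutelyContinuousOnInterval).intervalIntegrable_deriv
  rw [intervalIntegral.integral_sub (hint1.sub hint2) (by simp)] at hFTC
  simp only [intervalIntegral.integral_const, smul_eq_mul] at hFTC
  linarith

lemma norm_pow_sub_pow_le_aux (x y : ℂ) (m : ℕ) {M : ℝ} (hx : ‖x‖ ≤ M) (hy : ‖y‖ ≤ M) :
    ‖x ^ (m + 1) - y ^ (m + 1)‖ ≤ (m + 1) * M ^ m * ‖x - y‖ := by
  have hM : 0 ≤ M := (norm_nonneg x).trans hx
  rw [← (Commute.all x y).geom_sum₂_mul, norm_mul]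
  refine mul_le_mul_of_nonneg_right ?_ (norm_nonneg _)
  refine (norm_sum_le _ _).trans ?_
  have : ∀ i ∈ Finset.range (m + 1), ‖x ^ i * y ^ (m + 1 - 1 - i)‖ ≤ M ^ m := by
    intro i hi
    have hi' : i ≤ m := by simpa [Nat.lt_succ_iff] using hi
    rw [norm_mul, norm_pow, norm_pow]
    calc ‖x‖ ^ i * ‖y‖ ^ (m + 1 - 1 - i) ≤ M ^ i * M ^ (m + 1 - 1 - i) := by gcongr
      _ = M ^ m := by rw [← pow_add]; congr 1; omega
  refine (Finset.sum_le_sum this).trans ?_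
  simp

/-- The exponent is `2` modulo `4`, so `-Re (w ^ (4 j + 2))` is `|Im w| ^ (4 j + 2)` when `w` is
imaginary, with an error that the real part controls. The factor `8` matches the Lipschitz constant
of the curves in `sawtooth_ineq`. -/
lemma im_pow_le (j : ℕ) : ∃ K : ℝ, 0 < K ∧ ∀ w : ℂ,
    |w.im| ^ (4 * j + 2) ≤ 2 * (-(w ^ (4 * j + 2)).re - 8 * |(w ^ (4 * j + 2)).im|)
      + K * |w.re| ^ (4 * j + 2) := by
  set l : ℕ := 4 * j + 1 with hl
  have hm : 4 * j + 2 = l + 1 := by omega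
  rw [hm]
  set ε : ℝ := 1 / (18 * (l + 1) * 2 ^ l) with hε
  have hεpos : 0 < ε := by positivity
  refine ⟨18 * (l + 1) * (1 + 1 / ε) ^ l, by positivity, fun w => ?_⟩
  set a := |w.re| with ha
  set b := |w.im| with hb
  have ha0 : 0 ≤ a := abs_nonneg _
  have hb0 : 0 ≤ b := abs_nonneg _
  have hkey : ‖w ^ (l + 1) - (w.im * Complex.I) ^ (l + 1)‖ ≤ (l + 1) * (a + b) ^ l * a := by
    have h1 := norm_pow_sub_pow_le_aux w (w.im * Complex.I) l (M := a + b)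
      (Complex.norm_le_abs_re_add_abs_im w) (by simp [ha0, ← hb])
    have h2 : w - w.im * Complex.I = (w.re : ℂ) := by
      apply Complex.ext <;> simp
    rw [h2] at h1
    simpa using h1
  have hpow : (w.im * Complex.I) ^ (l + 1) = ((-(b ^ (l + 1)) : ℝ) : ℂ) := by
    have hI : Complex.I ^ (l + 1) = -1 := by
      rw [← hm, pow_add, pow_mul, Complex.I_pow_four]; simp
    have hev : Even (l + 1) := ⟨2 * j + 1, by omega⟩
    rw [mul_pow, hI, hb, hev.pow_abs]
    push_cast; ring
  rw [hpow] at hkey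
  have hre := (Complex.abs_re_le_norm _).trans hkey
  have him := (Complex.abs_im_le_norm _).trans hkey
  rw [Complex.sub_re, Complex.ofReal_re] at hre
  rw [Complex.sub_im, Complex.ofReal_im, sub_zero] at him
  have hre' := (abs_le.1 hre).2
  set D := (l + 1 : ℝ) * (a + b) ^ l * a with hD
  have hmain : 18 * D ≤ b ^ (l + 1) + 18 * (l + 1) * (1 + 1 / ε) ^ l * a ^ (l + 1) := by
    rcases le_total a (ε * b) with hab | hab
    · have hε1 : ε ≤ 1 := by
        rw [hε, div_le_one (by positivity)]
        have : (1:ℝ) ≤ 2 ^ l := one_le_pow₀ (by norm_num)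
        nlinarith [(Nat.cast_nonneg l : (0:ℝ) ≤ l)]
      have hab' : a + b ≤ 2 * b := by nlinarith
      have : 18 * D ≤ 18 * ((l + 1) * (2 * b) ^ l * (ε * b)) := by
        rw [hD]; gcongr
      have e : 18 * ((l + 1) * (2 * b) ^ l * (ε * b)) = b ^ (l + 1) := by
        rw [hε, mul_pow]; field_simp; exact (pow_succ _ _).symm
      have : 0 ≤ 18 * (l + 1 : ℝ) * (1 + 1 / ε) ^ l * a ^ (l + 1) := by positivity
      linarith
    · have hb' : a + b ≤ (1 + 1 / ε) * a := by
        have : b ≤ a / ε := by rw [le_div_iff₀ hεpos]; linarith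
        have e : (1 + 1 / ε) * a = a + a / ε := by ring
        linarith
      have h1 : 18 * D ≤ 18 * ((l + 1) * ((1 + 1 / ε) * a) ^ l * a) := by
        rw [hD]; gcongr
      have e : 18 * ((l + 1) * ((1 + 1 / ε) * a) ^ l * a)
          = 18 * (l + 1) * (1 + 1 / ε) ^ l * a ^ (l + 1) := by
        rw [mul_pow]; ring
      have : 0 ≤ b ^ (l + 1) := by positivity
      linarith
  linarith

/-- A version of the M. Riesz inequality on Lipschitz curves: apply `cauchy_sawtooth` to
`f ^ (4 j + 2)`, whose value at the origin is nonnegative. -/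
lemma sawtooth_ineq (j : ℕ) : ∃ K : ℝ, 0 < K ∧ ∀ (R : ℝ), 1 < R → ∀ f : ℂ → ℂ,
    DifferentiableOn ℂ f (Metric.ball (0:ℂ) R) → (f 0).im = 0 →
    ∀ h : ℝ → ℝ, LipschitzWith 8 h → (∀ θ, 0 ≤ h θ) → h (-Real.pi) = h Real.pi →
    ∫⁻ θ in Ioo (-Real.pi) Real.pi,
        ENNReal.ofReal (|(f (Complex.exp (-(h θ : ℂ) + θ * Complex.I))).im| ^ (4 * j + 2))
      ≤ ENNReal.ofReal K * ∫⁻ θ in Ioo (-Real.pi) Real.pi,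
        ENNReal.ofReal (|(f (Complex.exp (-(h θ : ℂ) + θ * Complex.I))).re| ^ (4 * j + 2)) := by
  obtain ⟨K, hK, hKw⟩ := im_pow_le j
  refine ⟨K, hK, fun R hR f hf hf0 h hL h0 hper => ?_⟩
  set m := 4 * j + 2 with hm
  have hG : DifferentiableOn ℂ (fun z => f z ^ m) (Metric.ball (0:ℂ) R) := hf.pow m
  have hreal : f 0 = ((f 0).re : ℂ) := Complex.ext (by simp) (by simp [hf0])
  have hG0 : (f 0 ^ m).im = 0 := by
    rw [hreal, ← Complex.ofReal_pow]; exact Complex.ofReal_im _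
  have hG0' : 0 ≤ (f 0 ^ m).re := by
    rw [hreal, ← Complex.ofReal_pow, Complex.ofReal_re]
    exact Even.pow_nonneg ⟨2 * j + 1, by omega⟩ _
  have hC := cauchy_sawtooth hR hG hG0 hL h0 hper
  set z : ℝ → ℂ := fun θ => Complex.exp (-(h θ : ℂ) + θ * Complex.I) with hz
  have hzc : Continuous z := by
    have := hL.continuous
    fun_prop
  have hfz : Continuous fun θ => f (z θ) := by
    refine hf.continuousOn.comp_continuous hzc fun θ => ?_
    have : ‖z θ‖ ≤ 1 := by simp [hz, Complex.norm_exp, h0 θ]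
    simpa using lt_of_le_of_lt this hR
  have hpi : -Real.pi ≤ Real.pi := by linarith [Real.pi_pos]
  have cim : Continuous fun θ => |(f (z θ)).im| ^ m := (Complex.continuous_im.comp hfz).abs.pow m
  have cre : Continuous fun θ => |(f (z θ)).re| ^ m := (Complex.continuous_re.comp hfz).abs.pow m
  have c1 : Continuous fun θ => (f (z θ) ^ m).re := Complex.continuous_re.comp (hfz.pow m)
  have c2 : Continuous fun θ => (f (z θ) ^ m).im := Complex.continuous_im.comp (hfz.pow m)
  have i2 : IntervalIntegrable (fun θ => deriv h θ * (f (z θ) ^ m).im) volume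
      (-Real.pi) Real.pi :=
    IntervalIntegrable.mul_continuousOn
      (hL.lipschitzOnWith.absolutelyContinuousOnInterval).intervalIntegrable_deriv c2.continuousOn
  have hle : ∫ θ in (-Real.pi)..Real.pi, |(f (z θ)).im| ^ m
      ≤ ∫ θ in (-Real.pi)..Real.pi, (-2 * ((f (z θ) ^ m).re - deriv h θ * (f (z θ) ^ m).im)
          + K * |(f (z θ)).re| ^ m) := by
    refine intervalIntegral.integral_mono_on hpi (cim.intervalIntegrable _ _)
      ((((c1.intervalIntegrable _ _).sub i2).const_mul _).add
        ((cre.intervalIntegrable _ _).const_mul _)) fun θ _ => ?_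
    refine (hKw (f (z θ))).trans ?_
    have hd : |deriv h θ| ≤ 8 := by simpa using norm_deriv_le_of_lipschitz (x₀ := θ) hL
    have : deriv h θ * (f (z θ) ^ m).im ≥ -(8 * |(f (z θ) ^ m).im|) := by
      have h1 := neg_abs_le (deriv h θ * (f (z θ) ^ m).im)
      rw [abs_mul] at h1
      have := mul_le_mul_of_nonneg_right hd (abs_nonneg (f (z θ) ^ m).im)
      linarith
    linarith
  rw [intervalIntegral.integral_add (((c1.intervalIntegrable _ _).sub i2).const_mul _)
    ((cre.intervalIntegrable _ _).const_mul _), intervalIntegral.integral_const_mul,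
    intervalIntegral.integral_const_mul, hC] at hle
  have hle2 : ∫ θ in (-Real.pi)..Real.pi, |(f (z θ)).im| ^ m
      ≤ K * ∫ θ in (-Real.pi)..Real.pi, |(f (z θ)).re| ^ m := by
    have : 0 ≤ Real.pi * (f 0 ^ m).re := mul_nonneg Real.pi_pos.le hG0'
    linarith
  have conv : ∀ g : ℝ → ℝ, Continuous g → (∀ θ, 0 ≤ g θ) →
      ∫⁻ θ in Ioo (-Real.pi) Real.pi, ENNReal.ofReal (g θ)
        = ENNReal.ofReal (∫ θ in (-Real.pi)..Real.pi, g θ) := by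
    intro g hg hg0
    rw [intervalIntegral.integral_of_le hpi, integral_Ioc_eq_integral_Ioo,
      ofReal_integral_eq_lintegral_ofReal]
    · exact ((hg.intervalIntegrable _ _).1.mono_set Ioo_subset_Ioc_self)
    · exact Filter.Eventually.of_forall hg0
  rw [conv _ cim fun θ => by positivity, conv _ cre fun θ => by positivity,
    ← ENNReal.ofReal_mul hK.le]
  exact ENNReal.ofReal_le_ofReal hle2

/-! ### The distributional inequality -/

/-- The function `n` of the angle dominates the nontangential maximal function of `u` on the unit
circle. Both angles are principal, so a cone never crosses the negative real axis, in accordance with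
the definition of `Stolz`. -/
def DominatesCones (u : ℂ → ℝ) (n : ℝ → ℝ) : Prop :=
  ∀ θ ∈ Ioo (-Real.pi) Real.pi, ∀ φ ∈ Ioo (-Real.pi) Real.pi, ∀ ρ : ℝ, 0 < ρ → ρ < 1 →
    |θ - φ| < 1 / 2 * (1 - ρ) → |u (ρ * Complex.exp (φ * Complex.I))| ≤ n θ

/-- A set whose complement in `(-π, π)` has measure less than `δ` is `δ`-dense, as a half of each
`δ`-neighbourhood lies in `(-π, π)`. -/
lemma infDist_le_of_volume_diff_lt {A : Set ℝ} {δ : ℝ} (hδ : 0 < δ) (hδ' : δ ≤ Real.pi)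
    (hvol : volume (Ioo (-Real.pi) Real.pi \ A) < ENNReal.ofReal δ) {θ : ℝ}
    (hθ : θ ∈ Ioo (-Real.pi) Real.pi) : ∃ t ∈ A, |θ - t| ≤ δ := by
  by_contra! hcon
  have key : ∀ a b : ℝ, b - a = δ → Ioo a b ⊆ Ioo (-Real.pi) Real.pi →
      (∀ t ∈ Ioo a b, |θ - t| ≤ δ) → False := by
    intro a b hab hsub hd
    have : Ioo a b ⊆ Ioo (-Real.pi) Real.pi \ A := fun t ht =>
      ⟨hsub ht, fun htA => absurd (hd t ht) (not_le.2 (hcon t htA))⟩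
    have h2 := measure_mono (μ := volume) this
    rw [Real.volume_Ioo, hab] at h2
    exact absurd hvol (not_lt.2 h2)
  rcases le_total θ 0 with h | h
  · refine key θ (θ + δ) (by ring) ?_ ?_
    · intro t ht; exact ⟨by linarith [hθ.1, ht.1], by linarith [ht.2]⟩
    · intro t ht; rw [abs_le]; constructor <;> linarith [ht.1, ht.2]
  · refine key (θ - δ) θ (by ring) ?_ ?_
    · intro t ht; exact ⟨by linarith [ht.1], by linarith [hθ.2, ht.2]⟩
    · intro t ht; rw [abs_le]; constructor <;> linarith [ht.1, ht.2]

lemma one_sub_exp_neg_ge {x : ℝ} (h0 : 0 ≤ x) (h1 : x ≤ 1) : x / 2 ≤ 1 - Real.exp (-x) := by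
  have h2 : Real.exp (-x) ≤ 1 / (1 + x) := by
    rw [Real.exp_neg, ← one_div]
    exact one_div_le_one_div_of_le (by linarith) (by linarith [Real.add_one_le_exp x])
  have h3 : 1 / (1 + x) ≤ 1 - x / 2 := by
    rw [div_le_iff₀ (by linarith)]; nlinarith
  linarith

lemma radial_limit_le {R : ℝ} (hR : 1 < R) {f : ℂ → ℂ}
    (hf : DifferentiableOn ℂ f (Metric.ball (0:ℂ) R)) {n : ℝ → ℝ}
    (hn : DominatesCones (fun z => (f z).re) n) {θ : ℝ} (hθ : θ ∈ Ioo (-Real.pi) Real.pi) :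
    |(f (Complex.exp (θ * Complex.I))).re| ≤ n θ := by
  have hmem : Complex.exp (θ * Complex.I) ∈ Metric.ball (0:ℂ) R := by
    simpa [Complex.norm_exp_ofReal_mul_I] using hR
  have hfc : ContinuousAt f (Complex.exp (θ * Complex.I)) :=
    (hf.differentiableAt (Metric.isOpen_ball.mem_nhds hmem)).continuousAt
  have ht : Filter.Tendsto (fun ρ : ℝ => |(f (ρ * Complex.exp (θ * Complex.I))).re|)
      (nhdsWithin 1 (Iio 1)) (nhds |(f (Complex.exp (θ * Complex.I))).re|) := by
    have h1 : ContinuousAt (fun ρ : ℝ => (ρ : ℂ) * Complex.exp (θ * Complex.I)) 1 := by fun_prop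
    have h2 : ContinuousAt f (((1:ℝ) : ℂ) * Complex.exp (θ * Complex.I)) := by simpa using hfc
    have h3 : ContinuousAt (fun ρ : ℝ => |(f (ρ * Complex.exp (θ * Complex.I))).re|) 1 :=
      (Complex.continuous_re.continuousAt.comp (ContinuousAt.comp (g := f)
        (f := fun ρ : ℝ => (ρ : ℂ) * Complex.exp (θ * Complex.I)) h2 h1)).abs
    have h4 := h3.tendsto
    simp only [Complex.ofReal_one, one_mul] at h4
    exact h4.mono_left nhdsWithin_le_nhds
  refine le_of_tendsto ht ?_
  have : Ioo (0:ℝ) 1 ∈ nhdsWithin 1 (Iio 1) := Ioo_mem_nhdsLT (by norm_num)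
  filter_upwards [this] with ρ hρ
  refine hn θ hθ θ hθ ρ hρ.1 hρ.2 ?_
  rw [sub_self, abs_zero]
  linarith [hρ.2]

/-- The distributional inequality behind the lower bound. If the set where `n` is large has
measure comparable to the whole circle the claim is trivial; otherwise `sawtooth_ineq` is applied to
a curve inside the cones at points where `n ≤ l`. -/
lemma good_lambda (j : ℕ) : ∃ C : ℝ, 0 < C ∧ ∀ (R : ℝ), 1 < R → ∀ f : ℂ → ℂ,
    DifferentiableOn ℂ f (Metric.ball (0:ℂ) R) → (f 0).im = 0 →
    ∀ n : ℝ → ℝ, Measurable n → (∀ θ, 0 ≤ n θ) → DominatesCones (fun z => (f z).re) n →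
    ∀ l : ℝ, 0 < l →
    ENNReal.ofReal (l ^ (4 * j + 2)) * (volume.restrict (Ioo (-Real.pi) Real.pi))
        {θ : ℝ | l < |(f (Complex.exp (θ * Complex.I))).im|}
      ≤ ENNReal.ofReal C * ∫⁻ θ in Ioo (-Real.pi) Real.pi,
        ENNReal.ofReal (min (n θ) l ^ (4 * j + 2)) := by
  obtain ⟨K, hK, hKs⟩ := sawtooth_ineq j
  refine ⟨32 * Real.pi + 2 + 3 * K, by positivity, ?_⟩
  intro R hR f hf hf0 n hnm hn0 hn l hl
  set m := 4 * j + 2 with hm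
  set S := Ioo (-Real.pi) Real.pi with hS
  have hSm : MeasurableSet S := measurableSet_Ioo
  have hπ := Real.pi_pos
  set T := ∫⁻ θ in S, ENNReal.ofReal (min (n θ) l ^ m) with hT
  set E := {θ | θ ∈ S ∧ l < n θ} with hE
  have hEm : MeasurableSet E := hSm.inter (measurableSet_lt measurable_const hnm)
  set V := {θ : ℝ | l < |(f (Complex.exp (θ * Complex.I))).im|} with hV
  have hVc : Continuous fun θ : ℝ => f (Complex.exp (θ * Complex.I)) := by
    refine hf.continuousOn.comp_continuous (by fun_prop) fun θ => ?_
    simpa [Complex.norm_exp_ofReal_mul_I] using hR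
  have hVm : MeasurableSet V :=
    measurableSet_lt measurable_const (Complex.continuous_im.comp hVc).abs.measurable
  rw [Measure.restrict_apply hVm]
  have hET : ENNReal.ofReal (l ^ m) * volume E ≤ T := by
    rw [← setLIntegral_const]
    calc ∫⁻ _ in E, ENNReal.ofReal (l ^ m)
        ≤ ∫⁻ θ in E, ENNReal.ofReal (min (n θ) l ^ m) := by
          refine setLIntegral_mono' hEm fun θ hθ => ?_
          rw [min_eq_right hθ.2.le]
      _ ≤ T := lintegral_mono_set fun θ hθ => hθ.1
  -- the condition at `-θ` makes `A` symmetric, so that the curve below closes up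
  set A := {θ | θ ∈ S ∧ n θ ≤ l ∧ n (-θ) ≤ l} with hA
  have hAm : MeasurableSet A := hSm.inter
    ((measurableSet_le hnm measurable_const).inter
      (measurableSet_le (hnm.comp measurable_neg) measurable_const))
  have hBE : volume (S \ A) ≤ 2 * volume E := by
    have hsub : S \ A ⊆ E ∪ -E := by
      rintro θ ⟨hθS, hθA⟩
      have hneg : -θ ∈ S := ⟨by linarith [hθS.2], by linarith [hθS.1]⟩
      by_contra hcon
      simp only [mem_union, not_or] at hcon
      refine hθA ⟨hθS, ?_, ?_⟩
      · by_contra h; exact hcon.1 ⟨hθS, not_le.1 h⟩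
      · by_contra h; exact hcon.2 ⟨hneg, not_le.1 h⟩
    calc volume (S \ A) ≤ volume (E ∪ -E) := measure_mono hsub
      _ ≤ volume E + volume (-E) := measure_union_le _ _
      _ = 2 * volume E := by rw [Measure.measure_neg, two_mul]
  have hBT : ENNReal.ofReal (l ^ m) * volume (S \ A) ≤ 2 * T := by
    calc _ ≤ ENNReal.ofReal (l ^ m) * (2 * volume E) := by gcongr
      _ = 2 * (ENNReal.ofReal (l ^ m) * volume E) := by ring
      _ ≤ 2 * T := by gcongr
  have hsum : ENNReal.ofReal (32 * Real.pi + 2 + 3 * K)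
      = ENNReal.ofReal (32 * Real.pi) + 2 + 3 * ENNReal.ofReal K := by
    rw [ENNReal.ofReal_add (by positivity) (by positivity),
      ENNReal.ofReal_add (by positivity) (by positivity), ENNReal.ofReal_mul (p := 3) (by norm_num)]
    simp
  rw [hsum]
  rcases le_or_gt (ENNReal.ofReal (1 / 8)) (volume (S \ A)) with hbig | hsmall
  · have h1 : volume (V ∩ S) ≤ ENNReal.ofReal (16 * Real.pi) * volume (S \ A) := by
      calc volume (V ∩ S) ≤ volume S := measure_mono inter_subset_right
        _ = ENNReal.ofReal (16 * Real.pi) * ENNReal.ofReal (1 / 8) := by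
          rw [hS, Real.volume_Ioo, ← ENNReal.ofReal_mul (by positivity)]; congr 1; ring
        _ ≤ _ := by gcongr
    calc ENNReal.ofReal (l ^ m) * volume (V ∩ S)
        ≤ ENNReal.ofReal (l ^ m) * (ENNReal.ofReal (16 * Real.pi) * volume (S \ A)) := by gcongr
      _ = ENNReal.ofReal (16 * Real.pi) * (ENNReal.ofReal (l ^ m) * volume (S \ A)) := by ring
      _ ≤ ENNReal.ofReal (16 * Real.pi) * (2 * T) := by gcongr
      _ = ENNReal.ofReal (32 * Real.pi) * T := by
        rw [← mul_assoc, show (32 * Real.pi) = 16 * Real.pi * 2 by ring,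
          ENNReal.ofReal_mul (q := 2) (by positivity)]
        simp
      _ ≤ _ := by
        gcongr
        rw [add_assoc]
        exact le_self_add
  · have hclose : ∀ θ ∈ S, ∃ t ∈ A, |θ - t| ≤ 1 / 8 := fun θ hθ =>
      infDist_le_of_volume_diff_lt (by norm_num) (by linarith [Real.pi_gt_three]) hsmall hθ
    have hAne : A.Nonempty := by
      obtain ⟨t, ht, _⟩ := hclose 0 ⟨by linarith, by linarith⟩
      exact ⟨t, ht⟩
    have hAneg : ∀ θ ∈ A, -θ ∈ A := fun θ hθ =>
      ⟨⟨by linarith [hθ.1.2], by linarith [hθ.1.1]⟩, hθ.2.2, by simpa using hθ.2.1⟩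
    set h : ℝ → ℝ := fun θ => 8 * Metric.infDist θ A with hh
    have h0 : ∀ θ, 0 ≤ h θ := fun θ => mul_nonneg (by norm_num) Metric.infDist_nonneg
    have hL : LipschitzWith 8 h := by
      refine LipschitzWith.of_dist_le_mul fun x y => ?_
      have := (Metric.lipschitz_infDist_pt A).dist_le_mul x y
      rw [Real.dist_eq, hh]
      simp only [← mul_sub, abs_mul]
      rw [Real.dist_eq] at this
      simp only [NNReal.coe_one, one_mul] at this
      simpa using this
    have hsymm : ∀ θ, Metric.infDist (-θ) A ≤ Metric.infDist θ A := by
      intro θ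
      refine (Metric.le_infDist hAne).2 fun t ht => ?_
      have := Metric.infDist_le_dist_of_mem (x := -θ) (hAneg t ht)
      rwa [dist_neg_neg] at this
    have hper : h (-Real.pi) = h Real.pi := by
      have h1 := hsymm Real.pi
      have h2 := hsymm (-Real.pi)
      rw [neg_neg] at h2
      simp only [hh]
      rw [le_antisymm h1 h2]
    have hsaw := hKs R hR f hf hf0 h hL h0 hper
    set z : ℝ → ℂ := fun θ => Complex.exp (-(h θ : ℂ) + θ * Complex.I) with hz
    have hzA : ∀ θ ∈ A, z θ = Complex.exp (θ * Complex.I) := by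
      intro θ hθ
      have : h θ = 0 := by simp [hh, Metric.infDist_zero_of_mem hθ]
      simp [hz, this]
    have huA : ∀ θ ∈ A, |(f (z θ)).re| ≤ n θ := by
      intro θ hθ
      rw [hzA θ hθ]
      exact radial_limit_le hR hf hn hθ.1
    have hzc : Continuous z := by
      have := hL.continuous
      fun_prop
    have hfz : Continuous fun θ => f (z θ) := by
      refine hf.continuousOn.comp_continuous hzc fun θ => ?_
      have : ‖z θ‖ ≤ 1 := by simp [hz, Complex.norm_exp, h0 θ]
      simpa using lt_of_le_of_lt this hR
    have huS : ∀ θ ∈ S, |(f (z θ)).re| ≤ l := by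
      intro θ hθ
      rcases (Metric.infDist_nonneg (x := θ) (s := A)).eq_or_lt with hd | hd
      · have hcl : θ ∈ closure A := (Metric.mem_closure_iff_infDist_zero hAne).2 hd.symm
        have hclosed : IsClosed {θ | |(f (z θ)).re| ≤ l} :=
          isClosed_le (Complex.continuous_re.comp hfz).abs continuous_const
        exact closure_minimal (fun t ht => (huA t ht).trans ht.2.1) hclosed hcl
      · obtain ⟨t₀, ht₀, hle₀⟩ := hclose θ hθ
        have hd8 : Metric.infDist θ A ≤ 1 / 8 :=
          (Metric.infDist_le_dist_of_mem ht₀).trans (by rwa [Real.dist_eq])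
        obtain ⟨t, ht, hlt⟩ := (Metric.infDist_lt_iff hAne).1
          (show Metric.infDist θ A < 2 * Metric.infDist θ A by linarith)
        have hexp := one_sub_exp_neg_ge (x := h θ) (h0 θ) (by simp only [hh]; linarith)
        have hzeq : z θ = (Real.exp (-(h θ)) : ℝ) * Complex.exp (θ * Complex.I) := by
          simp only [hz, Complex.exp_add]; push_cast; rfl
        have hhpos : 0 < h θ := by simp only [hh]; linarith
        have := hn t ht.1 θ hθ (Real.exp (-(h θ))) (Real.exp_pos _)
          (by rw [Real.exp_lt_one_iff]; linarith) (by
            rw [abs_sub_comm, ← Real.dist_eq]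
            have : h θ = 8 * Metric.infDist θ A := rfl
            linarith)
        rw [hzeq]
        exact this.trans ht.2.1
    have hAS : A ⊆ S := fun θ hθ => hθ.1
    have hBm : MeasurableSet (S \ A) := hSm.diff hAm
    have hre : ∫⁻ θ in S, ENNReal.ofReal (|(f (z θ)).re| ^ m) ≤ 3 * T := by
      have hsplit : S = A ∪ (S \ A) := (union_sdiff_cancel hAS).symm
      calc ∫⁻ θ in S, ENNReal.ofReal (|(f (z θ)).re| ^ m)
          = ∫⁻ θ in A ∪ (S \ A), ENNReal.ofReal (|(f (z θ)).re| ^ m) := by rw [← hsplit]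
        _ ≤ (∫⁻ θ in A, ENNReal.ofReal (|(f (z θ)).re| ^ m))
            + ∫⁻ θ in S \ A, ENNReal.ofReal (|(f (z θ)).re| ^ m) := lintegral_union_le _ _ _
        _ ≤ (∫⁻ θ in A, ENNReal.ofReal (min (n θ) l ^ m))
            + ∫⁻ θ in S \ A, ENNReal.ofReal (l ^ m) := by
          refine add_le_add (setLIntegral_mono' hAm fun θ hθ => ?_)
            (setLIntegral_mono' hBm fun θ hθ => ?_)
          · gcongr
            exact le_min (huA θ hθ) (huS θ hθ.1)
          · gcongr
            exact huS θ hθ.1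
        _ ≤ T + 2 * T := by
          refine add_le_add (lintegral_mono_set hAS) ?_
          rw [setLIntegral_const]
          exact hBT
        _ = 3 * T := by ring
    have hVA : ENNReal.ofReal (l ^ m) * volume (V ∩ A)
        ≤ ∫⁻ θ in S, ENNReal.ofReal (|(f (z θ)).im| ^ m) := by
      rw [← setLIntegral_const]
      calc ∫⁻ _ in V ∩ A, ENNReal.ofReal (l ^ m)
          ≤ ∫⁻ θ in V ∩ A, ENNReal.ofReal (|(f (z θ)).im| ^ m) := by
            refine setLIntegral_mono' (hVm.inter hAm) fun θ hθ => ?_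
            gcongr
            rw [hzA θ hθ.2]
            exact le_of_lt hθ.1
        _ ≤ _ := lintegral_mono_set (inter_subset_right.trans hAS)
    calc ENNReal.ofReal (l ^ m) * volume (V ∩ S)
        ≤ ENNReal.ofReal (l ^ m) * (volume (S \ A) + volume (V ∩ A)) := by
          gcongr
          refine (measure_mono ?_).trans (measure_union_le _ _)
          rintro θ ⟨h1, h2⟩
          by_cases h3 : θ ∈ A
          · exact Or.inr ⟨h1, h3⟩
          · exact Or.inl ⟨h2, h3⟩
      _ ≤ 2 * T + ENNReal.ofReal K * (3 * T) := by
          rw [mul_add]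
          exact add_le_add hBT ((hVA.trans hsaw).trans (by gcongr))
      _ = (2 + 3 * ENNReal.ofReal K) * T := by ring
      _ ≤ _ := by
          gcongr
          exact le_add_self

/-! ### Bounding `f` by the maximal function of its real part -/

lemma lintegral_min_pow_le {p : ℝ} (hp : 0 < p) {m : ℕ} (hm : p < m) {N : ℝ} (hN : 0 ≤ N) :
    ∫⁻ t in Ioi (0:ℝ), ENNReal.ofReal (min N t ^ m) * ENNReal.ofReal (t ^ (p - 1 - m))
      ≤ ENNReal.ofReal ((1 / p + 1 / (m - p)) * N ^ p) := by
  have hm0 : m ≠ 0 := by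
    rintro rfl
    simp at hm
    linarith
  rcases hN.eq_or_lt with rfl | hN
  · have : ∫⁻ t in Ioi (0:ℝ), ENNReal.ofReal (min 0 t ^ m) * ENNReal.ofReal (t ^ (p - 1 - m))
        = ∫⁻ t in Ioi (0:ℝ), 0 := by
      refine setLIntegral_congr_fun measurableSet_Ioi fun t ht => ?_
      rw [min_eq_left (le_of_lt ht), zero_pow hm0]
      simp
    rw [this]
    simp
  have hmp : 0 < (m:ℝ) - p := by linarith
  have h1 : ∫⁻ t in Ioc 0 N, ENNReal.ofReal (min N t ^ m) * ENNReal.ofReal (t ^ (p - 1 - m))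
      = ENNReal.ofReal (N ^ p / p) := by
    have e : ∫⁻ t in Ioc 0 N, ENNReal.ofReal (min N t ^ m) * ENNReal.ofReal (t ^ (p - 1 - m))
        = ∫⁻ t in Ioc 0 N, ENNReal.ofReal (t ^ (p - 1)) := by
      refine setLIntegral_congr_fun measurableSet_Ioc fun t ht => ?_
      rw [min_eq_right ht.2, ← ENNReal.ofReal_mul (by have := ht.1; positivity),
        ← Real.rpow_natCast, ← Real.rpow_add ht.1]
      congr 2
      ring
    have hint : IntegrableOn (fun t : ℝ => t ^ (p - 1)) (Ioc 0 N) := by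
      have := intervalIntegral.intervalIntegrable_rpow' (a := 0) (b := N) (r := p - 1)
        (by linarith)
      rwa [intervalIntegrable_iff_integrableOn_Ioc_of_le hN.le] at this
    rw [e, ← ofReal_integral_eq_lintegral_ofReal hint, ← intervalIntegral.integral_of_le hN.le,
      integral_rpow (Or.inl (by linarith))]
    · congr 1
      rw [sub_add_cancel, Real.zero_rpow hp.ne', sub_zero]
    · filter_upwards [ae_restrict_mem measurableSet_Ioc] with t ht
      exact Real.rpow_nonneg ht.1.le _
  have h2 : ∫⁻ t in Ioi N, ENNReal.ofReal (min N t ^ m) * ENNReal.ofReal (t ^ (p - 1 - m))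
      = ENNReal.ofReal (N ^ p / (m - p)) := by
    have e : ∫⁻ t in Ioi N, ENNReal.ofReal (min N t ^ m) * ENNReal.ofReal (t ^ (p - 1 - m))
        = ∫⁻ t in Ioi N, ENNReal.ofReal (N ^ m) * ENNReal.ofReal (t ^ (p - 1 - m)) := by
      refine setLIntegral_congr_fun measurableSet_Ioi fun t ht => ?_
      rw [min_eq_left (le_of_lt ht)]
    have hint : IntegrableOn (fun t : ℝ => t ^ (p - 1 - m)) (Ioi N) :=
      integrableOn_Ioi_rpow_of_lt (by linarith) hN
    rw [e, lintegral_const_mul' _ _ ENNReal.ofReal_ne_top,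
      ← ofReal_integral_eq_lintegral_ofReal hint, integral_Ioi_rpow_of_lt (by linarith) hN,
      ← ENNReal.ofReal_mul (by positivity)]
    · congr 1
      have e1 : N ^ p = N ^ m * N ^ (p - 1 - m + 1) := by
        rw [← Real.rpow_natCast, ← Real.rpow_add hN]; congr 1; ring
      rw [e1, show p - 1 - (m:ℝ) + 1 = -(m - p) by ring, neg_div_neg_eq, mul_div_assoc]
    · filter_upwards [ae_restrict_mem measurableSet_Ioi] with t ht
      exact Real.rpow_nonneg (hN.trans ht).le _
  rw [← Ioc_union_Ioi_eq_Ioi hN.le]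
  refine (lintegral_union_le _ _ _).trans ?_
  rw [h1, h2, ← ENNReal.ofReal_add (by positivity) (by positivity)]
  refine ENNReal.ofReal_le_ofReal (le_of_eq ?_)
  ring

/-- Integrating `good_lambda` against `l ^ (p - 1 - m)`, for `m = 4 ⌈p⌉ + 2 > p`, bounds the
`L^p` norm of `Im f`; the real part is bounded pointwise by `n`. -/
lemma lower_bound_circle (p : ℝ) (hp : 0 < p) : ∃ C : ℝ, 0 < C ∧ ∀ (R : ℝ), 1 < R → ∀ f : ℂ → ℂ,
    DifferentiableOn ℂ f (Metric.ball (0:ℂ) R) → (f 0).im = 0 →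
    ∀ n : ℝ → ℝ, Measurable n → (∀ θ, 0 ≤ n θ) → DominatesCones (fun z => (f z).re) n →
    ∫⁻ θ in Ioo (-Real.pi) Real.pi, ENNReal.ofReal (‖f (Complex.exp (θ * Complex.I))‖ ^ p)
      ≤ ENNReal.ofReal C * ∫⁻ θ in Ioo (-Real.pi) Real.pi, ENNReal.ofReal (n θ ^ p) := by
  set j := ⌈p⌉₊ with hj
  set m := 4 * j + 2 with hm
  have hpm : p < m := by
    have := Nat.le_ceil p
    rw [hm]; push_cast
    have : (0:ℝ) ≤ j := Nat.cast_nonneg _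
    linarith
  obtain ⟨C, hC, hgood⟩ := good_lambda j
  have hmp : 0 < (m:ℝ) - p := by linarith
  refine ⟨2 ^ p * (1 + p * C * (1 / p + 1 / (m - p))), by positivity, ?_⟩
  intro R hR f hf hf0 n hnm hn0 hn
  set μ : Measure ℝ := volume.restrict (Ioo (-Real.pi) Real.pi) with hμ
  have hfc : Continuous fun θ : ℝ => f (Complex.exp (θ * Complex.I)) := by
    refine hf.continuousOn.comp_continuous (by fun_prop) fun θ => ?_
    simpa [Complex.norm_exp_ofReal_mul_I] using hR
  set v : ℝ → ℝ := fun θ => |(f (Complex.exp (θ * Complex.I))).im| with hv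
  have hvc : Continuous v := (Complex.continuous_im.comp hfc).abs
  have hvp : ∫⁻ θ, ENNReal.ofReal (v θ ^ p) ∂μ
      ≤ ENNReal.ofReal (p * C * (1 / p + 1 / (m - p))) * ∫⁻ θ, ENNReal.ofReal (n θ ^ p) ∂μ := by
    rw [lintegral_rpow_eq_lintegral_meas_lt_mul μ (Filter.Eventually.of_forall fun θ => abs_nonneg _)
      hvc.measurable.aemeasurable hp]
    calc ENNReal.ofReal p * ∫⁻ t in Ioi 0, μ {a | t < v a} * ENNReal.ofReal (t ^ (p - 1))
        ≤ ENNReal.ofReal p * ∫⁻ t in Ioi (0:ℝ), ENNReal.ofReal C *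
            ∫⁻ θ, ENNReal.ofReal (min (n θ) t ^ m) * ENNReal.ofReal (t ^ (p - 1 - m)) ∂μ := by
          gcongr ENNReal.ofReal p * ?_
          refine setLIntegral_mono' measurableSet_Ioi fun t ht => ?_
          have ht0 : (0:ℝ) < t := ht
          have h1 := hgood R hR f hf hf0 n hnm hn0 hn t ht
          have e : ENNReal.ofReal (t ^ (p - 1))
              = ENNReal.ofReal (t ^ m) * ENNReal.ofReal (t ^ (p - 1 - m)) := by
            rw [← ENNReal.ofReal_mul (by positivity), ← Real.rpow_natCast, ← Real.rpow_add ht0]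
            congr 2
            ring
          rw [e, lintegral_mul_const' _ _ ENNReal.ofReal_ne_top]
          calc _ = (ENNReal.ofReal (t ^ m) * μ {a | t < v a}) * ENNReal.ofReal (t ^ (p - 1 - m)) := by
                ring
            _ ≤ _ := by
                rw [← mul_assoc]
                gcongr
      _ = ENNReal.ofReal p * ENNReal.ofReal C * ∫⁻ θ, ∫⁻ t in Ioi (0:ℝ),
            ENNReal.ofReal (min (n θ) t ^ m) * ENNReal.ofReal (t ^ (p - 1 - m)) ∂volume ∂μ := by
          rw [lintegral_const_mul' _ _ ENNReal.ofReal_ne_top, ← mul_assoc, lintegral_lintegral_swap]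
          refine Measurable.aemeasurable ?_
          have : Measurable fun x : ℝ × ℝ => min (n x.2) x.1 :=
            (hnm.comp measurable_snd).min measurable_fst
          exact (this.pow_const m).ennreal_ofReal.mul
            (measurable_fst.pow_const _).ennreal_ofReal
      _ ≤ ENNReal.ofReal p * ENNReal.ofReal C * ∫⁻ θ,
            ENNReal.ofReal ((1 / p + 1 / (m - p)) * n θ ^ p) ∂μ := by
          gcongr with θ
          exact lintegral_min_pow_le hp hpm (hn0 θ)
      _ = _ := by
          simp_rw [ENNReal.ofReal_mul (show 0 ≤ 1 / p + 1 / ((m:ℝ) - p) by positivity)]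
          rw [lintegral_const_mul' _ _ ENNReal.ofReal_ne_top, ← mul_assoc,
            ← ENNReal.ofReal_mul (by positivity), ← ENNReal.ofReal_mul (by positivity)]
  have hpt : ∀ θ ∈ Ioo (-Real.pi) Real.pi, ENNReal.ofReal (‖f (Complex.exp (θ * Complex.I))‖ ^ p)
      ≤ ENNReal.ofReal (2 ^ p) * (ENNReal.ofReal (n θ ^ p) + ENNReal.ofReal (v θ ^ p)) := by
    intro θ hθ
    have h1 := radial_limit_le hR hf hn hθ
    have hv0 : 0 ≤ v θ := abs_nonneg _
    have hn0' := hn0 θ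
    have h2 : ‖f (Complex.exp (θ * Complex.I))‖ ≤ 2 * max (n θ) (v θ) := by
      refine (Complex.norm_le_abs_re_add_abs_im _).trans ?_
      have := le_max_left (n θ) (v θ)
      have := le_max_right (n θ) (v θ)
      have : |(f (Complex.exp (θ * Complex.I))).im| = v θ := rfl
      linarith
    rw [← ENNReal.ofReal_add (by positivity) (by positivity), ← ENNReal.ofReal_mul (by positivity)]
    refine ENNReal.ofReal_le_ofReal ((Real.rpow_le_rpow (norm_nonneg _) h2 hp.le).trans ?_)
    rw [Real.mul_rpow (by norm_num) (le_max_of_le_left hn0')]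
    gcongr
    rcases max_choice (n θ) (v θ) with h | h <;> rw [h]
    · linarith [Real.rpow_nonneg hv0 p]
    · linarith [Real.rpow_nonneg hn0' p]
  calc ∫⁻ θ, ENNReal.ofReal (‖f (Complex.exp (θ * Complex.I))‖ ^ p) ∂μ
      ≤ ∫⁻ θ, ENNReal.ofReal (2 ^ p) * (ENNReal.ofReal (n θ ^ p) + ENNReal.ofReal (v θ ^ p)) ∂μ :=
        setLIntegral_mono' measurableSet_Ioo hpt
    _ = ENNReal.ofReal (2 ^ p) * ((∫⁻ θ, ENNReal.ofReal (n θ ^ p) ∂μ)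
          + ∫⁻ θ, ENNReal.ofReal (v θ ^ p) ∂μ) := by
        rw [lintegral_const_mul' _ _ ENNReal.ofReal_ne_top,
          lintegral_add_left (hnm.pow_const p).ennreal_ofReal]
    _ ≤ ENNReal.ofReal (2 ^ p) * ((∫⁻ θ, ENNReal.ofReal (n θ ^ p) ∂μ)
          + ENNReal.ofReal (p * C * (1 / p + 1 / (m - p))) * ∫⁻ θ, ENNReal.ofReal (n θ ^ p) ∂μ) := by
        gcongr
    _ = _ := by
        rw [ENNReal.ofReal_mul (p := 2 ^ p) (by positivity),
          ENNReal.ofReal_add (by norm_num) (by positivity)]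
        simp only [ENNReal.ofReal_one]
        ring

/-! ### Subharmonicity: bounding `|f| ^ q` by a Poisson integral -/

/-- The Poisson kernel of the unit disc, normalized to have integral one in the angle `ψ`. -/
noncomputable def discPoisson (z : ℂ) (ψ : ℝ) : ℝ :=
  (2 * Real.pi)⁻¹ * ((1 - ‖z‖ ^ 2) / ‖Complex.exp (ψ * Complex.I) - z‖ ^ 2)

lemma discPoisson_nonneg {z : ℂ} (hz : ‖z‖ < 1) (ψ : ℝ) : 0 ≤ discPoisson z ψ := by
  have : 0 ≤ 1 - ‖z‖ ^ 2 := by nlinarith [norm_nonneg z]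
  have := Real.pi_pos
  unfold discPoisson
  positivity

lemma continuous_discPoisson {z : ℂ} (hz : ‖z‖ < 1) : Continuous (discPoisson z) := by
  unfold discPoisson
  refine continuous_const.mul (Continuous.div continuous_const (by fun_prop) fun ψ => ?_)
  have : Complex.exp (ψ * Complex.I) - z ≠ 0 := by
    intro h
    rw [sub_eq_zero] at h
    rw [← h, Complex.norm_exp_ofReal_mul_I] at hz
    exact lt_irrefl _ hz
  positivity

lemma exp_add_two_pi_mul_I (ψ : ℝ) :
    Complex.exp (((ψ + 2 * Real.pi : ℝ) : ℂ) * Complex.I) = Complex.exp (ψ * Complex.I) := by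
  have := Complex.exp_mul_I_periodic (ψ : ℂ)
  simpa using this

lemma poisson_integral_eq {G : ℂ → ℂ} (hG : DiffContOnCl ℂ G (Metric.ball 0 1)) {z : ℂ}
    (hz : ‖z‖ < 1) :
    ∫ ψ in (0:ℝ)..2 * Real.pi, discPoisson z ψ • G (Complex.exp (ψ * Complex.I)) = G z := by
  have h := hG.circleAverage_poissonKernel_smul (w := z) (by simpa using hz)
  rw [Real.circleAverage_def, ← intervalIntegral.integral_smul] at h
  rw [← h]
  refine intervalIntegral.integral_congr fun ψ _ => ?_
  simp [discPoisson, poissonKernel, circleMap, mul_assoc, Complex.norm_exp_ofReal_mul_I]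

/-- On the closed disc `‖h‖ ^ q` is majorized by the modulus of a holomorphic function that has
the same modulus on the circle. -/
def HasMajorant (q : ℝ) (h : ℂ → ℂ) : Prop :=
  ∃ G : ℂ → ℂ, DiffContOnCl ℂ G (Metric.ball 0 1) ∧ (∀ z, ‖z‖ < 1 → ‖h z‖ ^ q ≤ ‖G z‖) ∧
    ∀ z, ‖z‖ = 1 → ‖G z‖ = ‖h z‖ ^ q

lemma HasMajorant.mul {q : ℝ} {h k : ℂ → ℂ} (hh : HasMajorant q h) (hk : HasMajorant q k) :
    HasMajorant q fun z => h z * k z := by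
  obtain ⟨G, hG, hG1, hG2⟩ := hh
  obtain ⟨H, hH, hH1, hH2⟩ := hk
  refine ⟨fun z => G z • H z, hG.smul hH, fun z hz => ?_, fun z hz => ?_⟩
  · simp only [smul_eq_mul]
    rw [norm_mul, norm_mul, Real.mul_rpow (norm_nonneg _) (norm_nonneg _)]
    gcongr
    · exact hG1 z hz
    · exact hH1 z hz
  · simp only [smul_eq_mul]
    rw [norm_mul, norm_mul, Real.mul_rpow (norm_nonneg _) (norm_nonneg _), hG2 z hz,
      hH2 z hz]

lemma hasMajorant_const (q : ℝ) (c : ℂ) : HasMajorant q fun _ => c :=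
  ⟨fun _ => c ^ (q : ℂ), diffContOnCl_const, fun z _ => by rw [Complex.norm_cpow_real],
    fun z _ => by rw [Complex.norm_cpow_real]⟩

lemma diffContOnCl_one_sub_mul_cpow {q : ℝ} (hq : 0 < q) {b : ℂ} (hb : ‖b‖ ≤ 1) :
    DiffContOnCl ℂ (fun z => (1 - b * z) ^ (q : ℂ)) (Metric.ball 0 1) := by
  have hre : ∀ z : ℂ, (b * z).re ≤ ‖z‖ := fun z =>
    (Complex.re_le_norm _).trans (by
      rw [norm_mul]; exact mul_le_of_le_one_left (norm_nonneg _) hb)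
  constructor
  · refine DifferentiableOn.cpow_const (by fun_prop) fun z hz => Or.inl ?_
    have := hre z
    rw [mem_ball_zero_iff] at hz
    simp only [Complex.sub_re, Complex.one_re]
    linarith
  · rw [closure_ball _ one_ne_zero]
    intro z hz
    refine ContinuousAt.continuousWithinAt ?_
    have hz' := hre z
    rw [mem_closedBall_zero_iff] at hz
    have h1 : ContinuousAt (fun x : ℂ => x ^ (q : ℂ)) (1 - b * z) :=
      Complex.continuousAt_cpow_const_of_re_pos
        (Or.inl (by simp only [Complex.sub_re, Complex.one_re]; linarith)) (by simpa using hq)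
    exact ContinuousAt.comp (f := fun z => 1 - b * z) (g := fun x : ℂ => x ^ (q : ℂ)) h1
      (by fun_prop)

lemma norm_sub_sq_identity (a z : ℂ) : ‖1 - (starRingEnd ℂ) a * z‖ ^ 2 - ‖z - a‖ ^ 2
    = (1 - ‖z‖ ^ 2) * (1 - ‖a‖ ^ 2) := by
  simp only [Complex.sq_norm, Complex.normSq_apply]
  simp
  ring

/-- A zero `a` in the disc is reflected: `|z - a| ≤ |1 - ā z|`, with equality on the circle. A zero
outside the disc needs no change. -/
lemma hasMajorant_sub {q : ℝ} (hq : 0 < q) (a : ℂ) : HasMajorant q fun z => z - a := by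
  rcases lt_or_ge ‖a‖ 1 with ha | ha
  · refine ⟨_, diffContOnCl_one_sub_mul_cpow hq (b := (starRingEnd ℂ) a) (by simpa using ha.le),
      fun z hz => ?_, fun z hz => ?_⟩
    · rw [Complex.norm_cpow_real]
      have h := norm_sub_sq_identity a z
      have h1 : 0 ≤ (1 - ‖z‖ ^ 2) * (1 - ‖a‖ ^ 2) :=
        mul_nonneg (by nlinarith [norm_nonneg z]) (by nlinarith [norm_nonneg a])
      refine Real.rpow_le_rpow (norm_nonneg _) ?_ hq.le
      exact le_of_sq_le_sq (by linarith) (norm_nonneg _)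
    · rw [Complex.norm_cpow_real]
      have h := norm_sub_sq_identity a z
      rw [hz] at h
      congr 1
      exact (sq_eq_sq₀ (norm_nonneg _) (norm_nonneg _)).1 (by linarith)
  · have ha0 : a ≠ 0 := by
      rintro rfl
      simp at ha
      linarith
    have h1 : HasMajorant q fun z => 1 - a⁻¹ * z :=
      ⟨_, diffContOnCl_one_sub_mul_cpow hq (b := a⁻¹) (by rw [norm_inv]; exact inv_le_one_of_one_le₀ ha),
        fun z _ => by rw [Complex.norm_cpow_real], fun z _ => by rw [Complex.norm_cpow_real]⟩
    have h2 := (hasMajorant_const q (-a)).mul h1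
    have e : (fun z : ℂ => -a * (1 - a⁻¹ * z)) = fun z => z - a := by
      funext z
      field_simp
      ring
    rwa [e] at h2

lemma hasMajorant_polynomial {q : ℝ} (hq : 0 < q) (P : Polynomial ℂ) :
    HasMajorant q fun z => P.eval z := by
  have key : ∀ s : Multiset ℂ,
      HasMajorant q fun z => ((s.map fun x => Polynomial.X - Polynomial.C x).prod).eval z := by
    intro s
    induction s using Multiset.induction with
    | empty => simpa using hasMajorant_const q 1
    | cons a s ih =>
      simp only [Multiset.map_cons, Multiset.prod_cons, Polynomial.eval_mul]
      refine HasMajorant.mul ?_ ih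
      simpa using hasMajorant_sub hq a
  rw [(IsAlgClosed.splits P).eq_prod_roots]
  simp only [Polynomial.eval_mul]
  refine HasMajorant.mul ?_ (key _)
  simpa using hasMajorant_const q P.leadingCoeff

lemma poisson_le_polynomial {q : ℝ} (hq : 0 < q) (P : Polynomial ℂ) {z : ℂ} (hz : ‖z‖ < 1) :
    ‖P.eval z‖ ^ q ≤ ∫ ψ in (0:ℝ)..2 * Real.pi,
      discPoisson z ψ * ‖P.eval (Complex.exp (ψ * Complex.I))‖ ^ q := by
  obtain ⟨G, hG, hG1, hG2⟩ := hasMajorant_polynomial hq P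
  refine (hG1 z hz).trans ?_
  rw [← poisson_integral_eq hG hz]
  refine (intervalIntegral.norm_integral_le_integral_norm (by positivity)).trans (le_of_eq ?_)
  refine intervalIntegral.integral_congr fun ψ _ => ?_
  rw [norm_smul, hG2 _ (Complex.norm_exp_ofReal_mul_I ψ), Real.norm_eq_abs,
    abs_of_nonneg (discPoisson_nonneg hz ψ)]

/-- The polynomial case passes to the limit along the Taylor polynomials of `f`, which converge
uniformly on the closed unit disc. -/
lemma poisson_le_integral {q : ℝ} (hq : 0 < q) {R : ℝ} (hR : 1 < R) {f : ℂ → ℂ}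
    (hf : DifferentiableOn ℂ f (Metric.ball (0:ℂ) R)) {z : ℂ} (hz : ‖z‖ < 1) :
    ‖f z‖ ^ q ≤ ∫ ψ in (0:ℝ)..2 * Real.pi,
      discPoisson z ψ * ‖f (Complex.exp (ψ * Complex.I))‖ ^ q := by
  obtain ⟨r, hr1, hrR⟩ := exists_between hR
  obtain ⟨s, hs1, hsr⟩ := exists_between hr1
  lift r to NNReal using by linarith
  lift s to NNReal using by linarith
  have hps := (hf.mono (Metric.closedBall_subset_ball hrR)).hasFPowerSeriesOnBall
    (by exact_mod_cast (by linarith : (0:ℝ) < r))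
  set a := cauchyPowerSeries f 0 r with ha
  have hu := hps.tendstoUniformlyOn (r' := s) (by exact_mod_cast hsr)
  simp only [zero_add] at hu
  set P : ℕ → Polynomial ℂ := fun n =>
    ∑ k ∈ Finset.range n, Polynomial.C (a.coeff k) * Polynomial.X ^ k with hP
  have hPe : ∀ n w, (P n).eval w = a.partialSum n w := by
    intro n w
    simp only [hP, FormalMultilinearSeries.partialSum, Polynomial.eval_finsetSum,
      Polynomial.eval_mul, Polynomial.eval_C, Polynomial.eval_pow, Polynomial.eval_X]
    refine Finset.sum_congr rfl fun k _ => ?_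
    rw [FormalMultilinearSeries.apply_eq_pow_smul_coeff, smul_eq_mul, mul_comm]
  have hmem : ∀ w : ℂ, ‖w‖ ≤ 1 → w ∈ Metric.ball (0:ℂ) s := fun w hw => by
    simpa using lt_of_le_of_lt hw hs1
  have hlim : ∀ w : ℂ, ‖w‖ ≤ 1 →
      Filter.Tendsto (fun n => ‖(P n).eval w‖ ^ q) Filter.atTop (nhds (‖f w‖ ^ q)) := by
    intro w hw
    have h1 := hu.tendsto_at (hmem w hw)
    simp only [← hPe] at h1
    exact h1.norm.rpow_const (Or.inr hq.le)
  obtain ⟨M, hM⟩ : ∃ M, ∀ w ∈ Metric.closedBall (0:ℂ) 1, ‖f w‖ ≤ M :=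
    (isCompact_closedBall (0:ℂ) 1).exists_bound_of_continuousOn
      (hf.continuousOn.mono (Metric.closedBall_subset_ball hR))
  refine le_of_tendsto_of_tendsto (hlim z hz.le) ?_ (Filter.Eventually.of_forall fun n =>
    poisson_le_polynomial hq (P n) hz)
  refine intervalIntegral.tendsto_integral_filter_of_dominated_convergence
    (fun ψ => discPoisson z ψ * (M + 1) ^ q) ?_ ?_ ?_ ?_
  · refine Filter.Eventually.of_forall fun n => Continuous.aestronglyMeasurable ?_
    refine (continuous_discPoisson hz).mul (Continuous.rpow_const ?_ fun _ => Or.inr hq.le)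
    exact ((P n).continuous.comp (by fun_prop)).norm
  · have h1 := Metric.tendstoUniformlyOn_iff.1 hu 1 one_pos
    filter_upwards [h1] with n hn
    refine Filter.Eventually.of_forall fun ψ _ => ?_
    have hψ : ‖Complex.exp (ψ * Complex.I)‖ ≤ 1 := (Complex.norm_exp_ofReal_mul_I ψ).le
    have h2 := hn _ (hmem _ hψ)
    rw [← hPe, dist_comm, dist_eq_norm] at h2
    have h3 := hM _ (mem_closedBall_zero_iff.2 hψ)
    have h4 : ‖(P n).eval (Complex.exp (ψ * Complex.I))‖ ≤ M + 1 := by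
      have := norm_sub_norm_le ((P n).eval (Complex.exp (ψ * Complex.I)))
        (f (Complex.exp (ψ * Complex.I)))
      linarith
    rw [norm_mul, Real.norm_eq_abs, Real.norm_eq_abs, abs_of_nonneg (discPoisson_nonneg hz ψ),
      abs_of_nonneg (by positivity)]
    exact mul_le_mul_of_nonneg_left (Real.rpow_le_rpow (norm_nonneg _) h4 hq.le)
      (discPoisson_nonneg hz ψ)
  · exact ((continuous_discPoisson hz).mul continuous_const).intervalIntegrable _ _
  · exact Filter.Eventually.of_forall fun ψ _ =>
      (hlim _ (Complex.norm_exp_ofReal_mul_I ψ).le).const_mul _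

lemma lintegral_discPoisson {z : ℂ} (hz : ‖z‖ < 1) (a : ℝ) :
    ∫⁻ ψ in Ioc a (a + 2 * Real.pi), ENNReal.ofReal (discPoisson z ψ) = 1 := by
  have hπ := Real.pi_pos
  have h := poisson_integral_eq (G := fun _ => 1) diffContOnCl_const hz
  have hper : Function.Periodic (discPoisson z) (2 * Real.pi) := fun ψ => by
    simp only [discPoisson]; rw [exp_add_two_pi_mul_I ψ]
  have h1 : ∫ ψ in (0:ℝ)..2 * Real.pi, discPoisson z ψ = 1 := by
    have e : ∫ ψ in (0:ℝ)..2 * Real.pi, discPoisson z ψ • (1:ℂ)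
        = ((∫ ψ in (0:ℝ)..2 * Real.pi, discPoisson z ψ : ℝ) : ℂ) := by
      rw [← intervalIntegral.integral_ofReal]
      simp
    rw [e] at h
    exact_mod_cast h
  have h2 := hper.intervalIntegral_add_eq a 0
  rw [zero_add, h1, intervalIntegral.integral_of_le (by linarith)] at h2
  rw [← ofReal_integral_eq_lintegral_ofReal, h2, ENNReal.ofReal_one]
  · exact ((continuous_discPoisson hz).integrableOn_Icc).mono_set Ioc_subset_Icc_self
  · exact Filter.Eventually.of_forall fun ψ => discPoisson_nonneg hz ψ

lemma poisson_le_lintegral {q : ℝ} (hq : 0 < q) {R : ℝ} (hR : 1 < R) {f : ℂ → ℂ}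
    (hf : DifferentiableOn ℂ f (Metric.ball (0:ℂ) R)) {z : ℂ} (hz : ‖z‖ < 1) (a : ℝ) :
    ENNReal.ofReal (‖f z‖ ^ q) ≤ ∫⁻ ψ in Ioc a (a + 2 * Real.pi),
      ENNReal.ofReal (discPoisson z ψ) *
        ENNReal.ofReal (‖f (Complex.exp (ψ * Complex.I))‖ ^ q) := by
  have hπ := Real.pi_pos
  have h := poisson_le_integral hq hR hf hz
  set F : ℝ → ℝ := fun ψ => discPoisson z ψ * ‖f (Complex.exp (ψ * Complex.I))‖ ^ q with hF
  have hper : Function.Periodic F (2 * Real.pi) := fun ψ => by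
    simp only [hF, discPoisson]; rw [exp_add_two_pi_mul_I ψ]
  have hfc : Continuous fun θ : ℝ => f (Complex.exp (θ * Complex.I)) := by
    refine hf.continuousOn.comp_continuous (by fun_prop) fun θ => ?_
    simpa [Complex.norm_exp_ofReal_mul_I] using hR
  have hFc : Continuous F :=
    (continuous_discPoisson hz).mul (hfc.norm.rpow_const fun _ => Or.inr hq.le)
  have h2 := hper.intervalIntegral_add_eq a 0
  rw [zero_add, intervalIntegral.integral_of_le (by linarith)] at h2
  refine (ENNReal.ofReal_le_ofReal h).trans ?_
  rw [← h2, ofReal_integral_eq_lintegral_ofReal]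
  · refine lintegral_mono fun ψ => ?_
    rw [hF, ENNReal.ofReal_mul (discPoisson_nonneg hz ψ)]
  · exact (hFc.integrableOn_Icc).mono_set Ioc_subset_Icc_self
  · exact Filter.Eventually.of_forall fun ψ =>
      mul_nonneg (discPoisson_nonneg hz ψ) (by positivity)

/-! ### The Poisson kernel and the Hardy–Littlewood maximal function -/

lemma norm_exp_sub_exp (x y : ℝ) :
    ‖Complex.exp (x * Complex.I) - Complex.exp (y * Complex.I)‖ = 2 * |Real.sin ((x - y) / 2)| := by
  have h := Complex.norm_exp_I_mul_ofReal_sub_one (x - y)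
  have e : Complex.exp (x * Complex.I) - Complex.exp (y * Complex.I)
      = Complex.exp (y * Complex.I) * (Complex.exp (Complex.I * ((x - y : ℝ) : ℂ)) - 1) := by
    rw [mul_sub, ← Complex.exp_add, mul_one]
    congr 2
    push_cast
    ring
  rw [e, norm_mul, Complex.norm_exp_ofReal_mul_I, one_mul, h, Real.norm_eq_abs, abs_mul]
  simp

/-- For a point of the cone at `θ` the Poisson kernel is bounded by a kernel that depends only on the
distance to `θ` and decreases with it. -/
lemma discPoisson_le {ρ φ θ ψ : ℝ} (h0 : 0 ≤ ρ) (h1 : ρ < 1) (hφ : |θ - φ| < 1 / 2 * (1 - ρ))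
    (hψ : |ψ - θ| ≤ Real.pi) :
    discPoisson (ρ * Complex.exp (φ * Complex.I)) ψ
      ≤ 32 * ((1 - ρ) / max (1 - ρ) |ψ - θ| ^ 2) := by
  have hπ := Real.pi_pos
  have hπ3 := Real.pi_gt_three
  have hπ4 := Real.pi_lt_d2
  set D := ‖Complex.exp (ψ * Complex.I) - ρ * Complex.exp (φ * Complex.I)‖ with hD
  have hnz : ‖(ρ : ℂ) * Complex.exp (φ * Complex.I)‖ = ρ := by
    rw [norm_mul, Complex.norm_exp_ofReal_mul_I, Complex.norm_real, mul_one, Real.norm_eq_abs,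
      abs_of_nonneg h0]
  have ht : 1 - ρ ≤ D := by
    have := norm_sub_norm_le (Complex.exp (ψ * Complex.I)) (ρ * Complex.exp (φ * Complex.I))
    rwa [Complex.norm_exp_ofReal_mul_I, hnz] at this
  have hx : |ψ - θ| ≤ 4 * D := by
    have h2 : ‖Complex.exp (φ * Complex.I) - Complex.exp (θ * Complex.I)‖ ≤ |θ - φ| := by
      rw [norm_exp_sub_exp, abs_sub_comm θ φ]
      have := Real.abs_sin_le_abs (x := (φ - θ) / 2)
      rw [abs_div, abs_two] at this
      linarith
    have h3 : ‖(ρ : ℂ) * Complex.exp (φ * Complex.I) - Complex.exp (φ * Complex.I)‖ = 1 - ρ := by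
      have e : (ρ : ℂ) * Complex.exp (φ * Complex.I) - Complex.exp (φ * Complex.I)
          = ((ρ - 1 : ℝ) : ℂ) * Complex.exp (φ * Complex.I) := by push_cast; ring
      rw [e, norm_mul, Complex.norm_exp_ofReal_mul_I, Complex.norm_real, mul_one, Real.norm_eq_abs,
        abs_sub_comm, abs_of_pos (by linarith)]
    have h4 : ‖Complex.exp (ψ * Complex.I) - Complex.exp (θ * Complex.I)‖
        ≤ D + (1 - ρ) + |θ - φ| := by
      rw [← h3]
      refine le_trans ?_ (add_le_add_right h2 _)
      refine le_trans (norm_sub_le_norm_sub_add_norm_sub _ (Complex.exp (φ * Complex.I)) _) ?_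
      gcongr
      exact norm_sub_le_norm_sub_add_norm_sub _ _ _
    rw [norm_exp_sub_exp] at h4
    have h5 := Real.mul_abs_le_abs_sin (x := (ψ - θ) / 2) (by rw [abs_div, abs_two]; linarith)
    rw [abs_div, abs_two] at h5
    have h6 : 2 / Real.pi * |ψ - θ| ≤ 5 / 2 * D := by linarith
    rw [div_mul_eq_mul_div, div_le_iff₀ hπ] at h6
    have : 0 ≤ D := norm_nonneg _
    nlinarith
  have hD0 : 0 < D := by linarith
  set M := max (1 - ρ) |ψ - θ| with hM
  have hM0 : 0 < M := lt_max_of_lt_left (by linarith)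
  have hMD : M ≤ 4 * D := max_le (by linarith) hx
  have h7 : (1 - ρ ^ 2) / D ^ 2 ≤ 32 * ((1 - ρ) / M ^ 2) := by
    rw [← mul_div_assoc, div_le_div_iff₀ (by positivity) (by positivity)]
    have h8 : M ^ 2 ≤ 16 * D ^ 2 := by nlinarith
    calc (1 - ρ ^ 2) * M ^ 2 ≤ (2 * (1 - ρ)) * (16 * D ^ 2) := by
          refine mul_le_mul (by nlinarith) h8 (by positivity) (by linarith)
      _ = _ := by ring
  unfold discPoisson
  rw [hnz, ← hD]
  refine le_trans ?_ h7
  have h9 : 0 ≤ (1 - ρ ^ 2) / D ^ 2 := div_nonneg (by nlinarith) (by positivity)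
  refine mul_le_of_le_one_left h9 (inv_le_one_of_one_le₀ (by linarith))

/-- The radially decreasing kernel is a superposition of indicators of intervals centred at `θ`, so
its integral against `h` is controlled by the averages of `h` over these intervals. -/
lemma lintegral_kernel_le {t : ℝ} (ht : 0 < t) {h : ℝ → ENNReal} (hh : Measurable h)
    {θ : ℝ} {m : ENNReal} (H : ∀ s ∈ Ioc 0 Real.pi,
      ∫⁻ ψ in Icc (θ - s) (θ + s), h ψ ≤ ENNReal.ofReal (2 * s) * m) :
    ∫⁻ ψ in Icc (θ - Real.pi) (θ + Real.pi), ENNReal.ofReal (t / max t |ψ - θ| ^ 2) * h ψ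
      ≤ 4 * m := by
  have hπ := Real.pi_pos
  have H' : ∀ s, 0 < s → ∫⁻ ψ in Icc (θ - Real.pi) (θ + Real.pi) ∩ {ψ | |ψ - θ| < s}, h ψ
      ≤ ENNReal.ofReal (2 * s) * m := by
    intro s hs
    rcases le_total s Real.pi with hsp | hsp
    · refine (lintegral_mono_set ?_).trans (H s ⟨hs, hsp⟩)
      rintro ψ ⟨_, h2⟩
      rw [mem_ofPred_eq, abs_lt] at h2
      exact ⟨by linarith, by linarith⟩
    · refine (lintegral_mono_set inter_subset_left).trans ((H Real.pi ⟨hπ, le_rfl⟩).trans ?_)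
      gcongr
  -- `t / M ^ 2` is the integral of `2 * t * s ^ (-3)` over `s > M`
  have hrep : ∀ ψ, ENNReal.ofReal (t / max t |ψ - θ| ^ 2)
      = ∫⁻ s in Ioi t, ENNReal.ofReal (2 * t * s ^ (-3 : ℝ)) *
        {s : ℝ | |ψ - θ| < s}.indicator 1 s := by
    intro ψ
    have hM : 0 < max t |ψ - θ| := lt_max_of_lt_left ht
    have e1 : ∫⁻ s in Ioi t, ENNReal.ofReal (2 * t * s ^ (-3 : ℝ)) *
        {s : ℝ | |ψ - θ| < s}.indicator 1 s
        = ∫⁻ s in Ioi (max t |ψ - θ|), ENNReal.ofReal (2 * t * s ^ (-3 : ℝ)) := by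
      have hms : MeasurableSet {s : ℝ | |ψ - θ| < s} := measurableSet_Ioi
      rw [show Ioi (max t |ψ - θ|) = {s : ℝ | |ψ - θ| < s} ∩ Ioi t by
        ext s; simp [and_comm], ← setLIntegral_indicator hms]
      refine lintegral_congr fun s => ?_
      by_cases hs : s ∈ {s : ℝ | |ψ - θ| < s}
      · simp only [indicator_of_mem hs, Pi.one_apply, mul_one]
      · simp only [indicator_of_notMem hs, mul_zero]
    have hint : IntegrableOn (fun s : ℝ => 2 * t * s ^ (-3 : ℝ)) (Ioi (max t |ψ - θ|)) :=
      (integrableOn_Ioi_rpow_of_lt (by norm_num) hM).const_mul _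
    rw [e1, ← ofReal_integral_eq_lintegral_ofReal hint, integral_const_mul,
      integral_Ioi_rpow_of_lt (by norm_num) hM]
    · congr 1
      rw [show (-3 : ℝ) + 1 = -2 by norm_num, Real.rpow_neg hM.le]
      norm_num
      field_simp
    · filter_upwards [ae_restrict_mem measurableSet_Ioi] with s hs
      have : 0 < s := hM.trans hs
      positivity
  have hmeas : Measurable fun x : ℝ × ℝ => {s : ℝ | |x.1 - θ| < s}.indicator (1 : ℝ → ENNReal) x.2 := by
    have : MeasurableSet {x : ℝ × ℝ | |x.1 - θ| < x.2} :=
      measurableSet_lt (by fun_prop) measurable_snd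
    have h2 : Measurable ({x : ℝ × ℝ | |x.1 - θ| < x.2}.indicator (1 : ℝ × ℝ → ENNReal)) :=
      measurable_one.indicator this
    exact h2
  calc ∫⁻ ψ in Icc (θ - Real.pi) (θ + Real.pi), ENNReal.ofReal (t / max t |ψ - θ| ^ 2) * h ψ
      = ∫⁻ ψ in Icc (θ - Real.pi) (θ + Real.pi), ∫⁻ s in Ioi t,
          ENNReal.ofReal (2 * t * s ^ (-3 : ℝ)) * {s : ℝ | |ψ - θ| < s}.indicator 1 s * h ψ := by
        refine lintegral_congr fun ψ => ?_
        rw [hrep, lintegral_mul_const]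
        exact (by fun_prop : Measurable fun s : ℝ => ENNReal.ofReal (2 * t * s ^ (-3 : ℝ))).mul
          (measurable_one.indicator measurableSet_Ioi)
    _ = ∫⁻ s in Ioi t, ∫⁻ ψ in Icc (θ - Real.pi) (θ + Real.pi),
          ENNReal.ofReal (2 * t * s ^ (-3 : ℝ)) * {s : ℝ | |ψ - θ| < s}.indicator 1 s * h ψ := by
        refine lintegral_lintegral_swap (Measurable.aemeasurable ?_)
        refine Measurable.mul (Measurable.mul ?_ hmeas) (hh.comp measurable_fst)
        fun_prop
    _ ≤ ∫⁻ s in Ioi t, ENNReal.ofReal (4 * t * s ^ (-2 : ℝ)) * m := by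
        refine setLIntegral_mono' measurableSet_Ioi fun s hs => ?_
        have hs0 : 0 < s := ht.trans hs
        simp only [mul_assoc]
        rw [lintegral_const_mul' _ _ ENNReal.ofReal_ne_top]
        have hms : MeasurableSet {ψ : ℝ | |ψ - θ| < s} :=
          measurableSet_lt (by fun_prop) measurable_const
        have e2 : ∫⁻ ψ in Icc (θ - Real.pi) (θ + Real.pi),
            {s : ℝ | |ψ - θ| < s}.indicator 1 s * h ψ
            = ∫⁻ ψ in Icc (θ - Real.pi) (θ + Real.pi) ∩ {ψ | |ψ - θ| < s}, h ψ := by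
          rw [inter_comm, ← setLIntegral_indicator hms]
          refine lintegral_congr fun ψ => ?_
          by_cases hψ : |ψ - θ| < s
          · simp [indicator, hψ]
          · simp [indicator, hψ]
        rw [e2]
        refine (mul_le_mul_right (H' s hs0) _).trans (le_of_eq ?_)
        rw [← mul_assoc, ← ENNReal.ofReal_mul (by positivity)]
        congr 2
        rw [show (-2 : ℝ) = -3 + 1 by norm_num, Real.rpow_add hs0, Real.rpow_one]
        ring
    _ = 4 * m := by
        have hint : IntegrableOn (fun s : ℝ => 4 * t * s ^ (-2 : ℝ)) (Ioi t) :=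
          (integrableOn_Ioi_rpow_of_lt (by norm_num) ht).const_mul _
        rw [lintegral_mul_const _ (by fun_prop), ← ofReal_integral_eq_lintegral_ofReal hint,
          integral_const_mul, integral_Ioi_rpow_of_lt (by norm_num) ht]
        · have : 4 * t * (-t ^ (-2 + 1 : ℝ) / (-2 + 1)) = 4 := by
            rw [show (-2 : ℝ) + 1 = -1 by norm_num, Real.rpow_neg ht.le, Real.rpow_one]
            field_simp
          rw [this]
          simp
        · filter_upwards [ae_restrict_mem measurableSet_Ioi] with s hs
          have : 0 < s := ht.trans hs
          positivity

lemma setLIntegral_periodic_le {h : ℝ → ENNReal} (hper : Function.Periodic h (2 * Real.pi)) :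
    ∫⁻ ψ in Ioc (-(2 * Real.pi)) (2 * Real.pi), h ψ ≤ 2 * ∫⁻ ψ in Ioo (-Real.pi) Real.pi, h ψ := by
  have hπ := Real.pi_pos
  have hT : 0 < 2 * Real.pi := by positivity
  have key : ∀ a, ∫⁻ ψ in Ioc a (a + 2 * Real.pi), h ψ = ∫⁻ ψ in Ioo (-Real.pi) Real.pi, h ψ := by
    intro a
    have h1 := (isAddFundamentalDomain_Ioc hT a).setLIntegral_eq
      (isAddFundamentalDomain_Ioc hT (-Real.pi)) h hper.map_vadd_zmultiples
    rw [h1, show -Real.pi + 2 * Real.pi = Real.pi by ring]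
    exact (setLIntegral_congr Ioo_ae_eq_Ioc).symm
  have hu : Ioc (-(2 * Real.pi)) (2 * Real.pi)
      = Ioc (-(2 * Real.pi)) (-(2 * Real.pi) + 2 * Real.pi) ∪ Ioc 0 (0 + 2 * Real.pi) := by
    rw [neg_add_cancel, zero_add, Ioc_union_Ioc_eq_Ioc (by linarith) (by linarith)]
  rw [hu]
  refine (lintegral_union_le _ _ _).trans (le_of_eq ?_)
  rw [key, key, two_mul]

/-- The weak type `(1, 1)` estimate for the centred Hardy–Littlewood maximal function on the circle,
by the Vitali covering lemma. -/
lemma maximal_weak_type {h : ℝ → ENNReal} (hper : Function.Periodic h (2 * Real.pi))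
    (m : ENNReal) :
    m * volume {θ | θ ∈ Ioo (-Real.pi) Real.pi ∧ ∃ s ∈ Ioc 0 Real.pi,
      ENNReal.ofReal (2 * s) * m < ∫⁻ ψ in Icc (θ - s) (θ + s), h ψ}
      ≤ 8 * ∫⁻ ψ in Ioo (-Real.pi) Real.pi, h ψ := by
  set B := {θ | θ ∈ Ioo (-Real.pi) Real.pi ∧ ∃ s ∈ Ioc 0 Real.pi,
      ENNReal.ofReal (2 * s) * m < ∫⁻ ψ in Icc (θ - s) (θ + s), h ψ} with hB
  have hch : ∀ θ, ∃ s, θ ∈ B → s ∈ Ioc 0 Real.pi ∧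
      ENNReal.ofReal (2 * s) * m < ∫⁻ ψ in Icc (θ - s) (θ + s), h ψ := by
    intro θ
    by_cases hθ : θ ∈ B
    · obtain ⟨s, hs, hs2⟩ := hθ.2
      exact ⟨s, fun _ => ⟨hs, hs2⟩⟩
    · exact ⟨0, fun h => absurd h hθ⟩
  choose r hr using hch
  obtain ⟨u, huB, hdisj, hcov⟩ := Vitali.exists_disjoint_subfamily_covering_enlargement_closedBall
    B (fun θ => θ) r Real.pi (fun θ hθ => (hr θ hθ).1.2) 4 (by norm_num)
  have hucount : u.Countable := by
    refine hdisj.countable_of_nonempty_interior fun b hb => ?_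
    refine ⟨b, Metric.ball_subset_interior_closedBall (Metric.mem_ball_self (hr b (huB hb)).1.1)⟩
  have hsub : B ⊆ ⋃ b ∈ u, Metric.closedBall b (4 * r b) := by
    intro θ hθ
    obtain ⟨b, hb, hsub⟩ := hcov θ hθ
    exact mem_biUnion hb (hsub (Metric.mem_closedBall_self (hr θ hθ).1.1.le))
  have hunion : (⋃ b ∈ u, Metric.closedBall b (r b)) ⊆ Ioc (-(2 * Real.pi)) (2 * Real.pi) := by
    refine iUnion₂_subset fun b hb => ?_
    have h1 := (huB hb).1
    have h2 := (hr b (huB hb)).1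
    rw [Real.closedBall_eq_Icc]
    intro x hx
    exact ⟨by linarith [h1.1, h2.2, hx.1], by linarith [h1.2, h2.2, hx.2]⟩
  have := hucount.to_subtype
  calc m * volume B ≤ m * ∑' b : u, volume (Metric.closedBall (b : ℝ) (4 * r b)) := by
        gcongr
        refine (measure_mono hsub).trans ?_
        rw [biUnion_eq_iUnion]
        exact measure_iUnion_le _
    _ = ∑' b : u, m * volume (Metric.closedBall (b : ℝ) (4 * r b)) := ENNReal.tsum_mul_left.symm
    _ ≤ ∑' b : u, 4 * ∫⁻ ψ in Metric.closedBall (b : ℝ) (r b), h ψ := by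
        refine ENNReal.tsum_le_tsum fun b => ?_
        have h1 := (hr b (huB b.2)).2
        have h0 := (hr b (huB b.2)).1.1
        rw [Real.volume_closedBall, Real.closedBall_eq_Icc,
          show 2 * (4 * r b) = 4 * (2 * r b) by ring, ENNReal.ofReal_mul (by norm_num)]
        calc m * (ENNReal.ofReal 4 * ENNReal.ofReal (2 * r b))
            = 4 * (ENNReal.ofReal (2 * r b) * m) := by
              rw [show ENNReal.ofReal 4 = 4 by simp]; ring
          _ ≤ _ := by gcongr
    _ = 4 * ∫⁻ ψ in ⋃ b ∈ u, Metric.closedBall b (r b), h ψ := by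
        rw [ENNReal.tsum_mul_left, lintegral_biUnion hucount
          (fun b _ => measurableSet_closedBall) hdisj]
    _ ≤ 4 * ∫⁻ ψ in Ioc (-(2 * Real.pi)) (2 * Real.pi), h ψ := by
        gcongr
    _ ≤ 4 * (2 * ∫⁻ ψ in Ioo (-Real.pi) Real.pi, h ψ) := by
        gcongr
        exact setLIntegral_periodic_le hper
    _ = _ := by rw [← mul_assoc]; norm_num

/-! ### Bounding the maximal function by `f` -/

/-- The hypothesis on `n` says that it is at most the nontangential maximal function of `f`. With
`q = p / 2`, the set `{n ^ q > 129 μ}` lies in the set where the maximal function of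
`g 1_{g > μ}`, `g = |f| ^ q`, exceeds `μ`; integrating the weak type estimate gives the `L^2`
bound. -/
lemma upper_bound_circle (p : ℝ) (hp : 0 < p) : ∃ C : ℝ, 0 < C ∧ ∀ (R : ℝ), 1 < R → ∀ f : ℂ → ℂ,
    DifferentiableOn ℂ f (Metric.ball (0:ℂ) R) →
    ∀ n : ℝ → ℝ, Measurable n → (∀ θ, 0 ≤ n θ) →
    (∀ θ ∈ Ioo (-Real.pi) Real.pi, ∀ l : ℝ, 0 ≤ l → l < n θ → ∃ φ ρ : ℝ, 0 ≤ ρ ∧ ρ < 1 ∧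
      |θ - φ| < 1 / 2 * (1 - ρ) ∧ l < ‖f (ρ * Complex.exp (φ * Complex.I))‖) →
    ∫⁻ θ in Ioo (-Real.pi) Real.pi, ENNReal.ofReal (n θ ^ p)
      ≤ ENNReal.ofReal C * ∫⁻ θ in Ioo (-Real.pi) Real.pi,
        ENNReal.ofReal (‖f (Complex.exp (θ * Complex.I))‖ ^ p) := by
  refine ⟨16 * 129 ^ 2, by positivity, ?_⟩
  intro R hR f hf n hnm hn0 hn
  have hπ := Real.pi_pos
  set q := p / 2 with hq
  have hq0 : 0 < q := by positivity
  set S := Ioo (-Real.pi) Real.pi with hS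
  set g : ℝ → ℝ := fun ψ => ‖f (Complex.exp (ψ * Complex.I))‖ ^ q with hg
  have hfc : Continuous fun θ : ℝ => f (Complex.exp (θ * Complex.I)) := by
    refine hf.continuousOn.comp_continuous (by fun_prop) fun θ => ?_
    simpa [Complex.norm_exp_ofReal_mul_I] using hR
  have hgc : Continuous g := hfc.norm.rpow_const fun _ => Or.inr hq0.le
  have hg0 : ∀ ψ, 0 ≤ g ψ := fun ψ => by positivity
  have hgper : Function.Periodic g (2 * Real.pi) := fun ψ => by
    simp only [hg]; rw [exp_add_two_pi_mul_I ψ]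
  -- the part of `g` above height `μ`
  set h : ℝ → ℝ → ENNReal := fun μ ψ => {x | μ < g x}.indicator (fun x => ENNReal.ofReal (g x)) ψ
    with hh
  have hhm : ∀ μ, Measurable (h μ) := fun μ =>
    hgc.measurable.ennreal_ofReal.indicator (measurableSet_lt measurable_const hgc.measurable)
  have hhper : ∀ μ, Function.Periodic (h μ) (2 * Real.pi) := by
    intro μ ψ
    simp only [hh, indicator, mem_ofPred_eq, hgper ψ]
  have hgh : ∀ μ ψ, ENNReal.ofReal (g ψ) ≤ ENNReal.ofReal μ + h μ ψ := by
    intro μ ψ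
    by_cases hψ : μ < g ψ
    · simp only [hh, indicator, mem_ofPred_eq, hψ, if_true]
      exact le_add_self
    · exact (ENNReal.ofReal_le_ofReal (not_lt.1 hψ)).trans le_self_add
  set B : ℝ → Set ℝ := fun μ => {θ | θ ∈ S ∧ ∃ s ∈ Ioc 0 Real.pi,
      ENNReal.ofReal (2 * s) * ENNReal.ofReal μ < ∫⁻ ψ in Icc (θ - s) (θ + s), h μ ψ} with hB
  have hnB : ∀ μ, 0 < μ → ∀ θ ∈ S, μ < n θ ^ q / 129 → θ ∈ B μ := by
    intro μ hμ θ hθ hlt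
    rw [lt_div_iff₀ (by norm_num)] at hlt
    have h129 : 0 ≤ μ * 129 := by positivity
    obtain ⟨φ, ρ, hρ0, hρ1, hφ, hbig⟩ := hn θ hθ ((μ * 129) ^ q⁻¹) (by positivity)
      ((Real.rpow_inv_lt_iff_of_pos h129 (hn0 θ) hq0).2 hlt)
    rw [Real.rpow_inv_lt_iff_of_pos h129 (norm_nonneg _) hq0] at hbig
    by_contra hcon
    have H : ∀ s ∈ Ioc 0 Real.pi,
        ∫⁻ ψ in Icc (θ - s) (θ + s), h μ ψ ≤ ENNReal.ofReal (2 * s) * ENNReal.ofReal μ := by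
      intro s hs
      by_contra hc
      exact hcon ⟨hθ, s, hs, not_le.1 hc⟩
    set z : ℂ := ρ * Complex.exp (φ * Complex.I) with hz
    have hz1 : ‖z‖ < 1 := by
      rw [hz, norm_mul, Complex.norm_exp_ofReal_mul_I, Complex.norm_real, mul_one,
        Real.norm_eq_abs, abs_of_nonneg hρ0]
      exact hρ1
    have hP := poisson_le_lintegral hq0 hR hf hz1 (θ - Real.pi)
    have hI : Ioc (θ - Real.pi) (θ - Real.pi + 2 * Real.pi) ⊆ Icc (θ - Real.pi) (θ + Real.pi) := by
      rw [show θ - Real.pi + 2 * Real.pi = θ + Real.pi by ring]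
      exact Ioc_subset_Icc_self
    have hle : ENNReal.ofReal (‖f z‖ ^ q) ≤ ENNReal.ofReal (μ * 129) := by
      calc ENNReal.ofReal (‖f z‖ ^ q)
          ≤ ∫⁻ ψ in Ioc (θ - Real.pi) (θ - Real.pi + 2 * Real.pi),
              ENNReal.ofReal (discPoisson z ψ) * ENNReal.ofReal (g ψ) := hP
        _ ≤ ∫⁻ ψ in Ioc (θ - Real.pi) (θ - Real.pi + 2 * Real.pi),
              (ENNReal.ofReal (discPoisson z ψ) * ENNReal.ofReal μ
                + ENNReal.ofReal (discPoisson z ψ) * h μ ψ) := by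
            refine lintegral_mono fun ψ => ?_
            rw [← mul_add]
            gcongr
            exact hgh μ ψ
        _ = ENNReal.ofReal μ + ∫⁻ ψ in Ioc (θ - Real.pi) (θ - Real.pi + 2 * Real.pi),
              ENNReal.ofReal (discPoisson z ψ) * h μ ψ := by
            have hpm := (continuous_discPoisson hz1).measurable.ennreal_ofReal
            rw [lintegral_add_left (hpm.mul_const _), lintegral_mul_const _ hpm,
              lintegral_discPoisson hz1, one_mul]
        _ ≤ ENNReal.ofReal μ + ∫⁻ ψ in Icc (θ - Real.pi) (θ + Real.pi),
              ENNReal.ofReal 32 *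
                (ENNReal.ofReal ((1 - ρ) / max (1 - ρ) |ψ - θ| ^ 2) * h μ ψ) := by
            gcongr ENNReal.ofReal μ + ?_
            refine (lintegral_mono_set hI).trans ?_
            refine setLIntegral_mono' measurableSet_Icc fun ψ hψ => ?_
            rw [← mul_assoc, ← ENNReal.ofReal_mul (by norm_num)]
            gcongr
            exact discPoisson_le hρ0 hρ1 hφ
              (abs_le.2 ⟨by linarith [hψ.1], by linarith [hψ.2]⟩)
        _ ≤ ENNReal.ofReal μ + ENNReal.ofReal 32 * (4 * ENNReal.ofReal μ) := by
            rw [lintegral_const_mul' _ _ ENNReal.ofReal_ne_top]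
            gcongr
            exact lintegral_kernel_le (by linarith) (hhm μ) H
        _ = ENNReal.ofReal (μ * 129) := by
            rw [ENNReal.ofReal_mul hμ.le, show ENNReal.ofReal 32 = 32 by simp,
              show ENNReal.ofReal 129 = 129 by simp]
            ring
    rw [ENNReal.ofReal_le_ofReal_iff h129] at hle
    linarith
  have hNm : Measurable fun θ => n θ ^ q / 129 := (hnm.pow_const q).div_const _
  have hlayer := lintegral_rpow_eq_lintegral_meas_lt_mul (volume.restrict S)
    (f := fun θ => n θ ^ q / 129) (p := 2)
    (Filter.Eventually.of_forall fun θ => div_nonneg (Real.rpow_nonneg (hn0 θ) _) (by norm_num))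
    hNm.aemeasurable (by norm_num)
  have hkey : ∫⁻ θ in S, ENNReal.ofReal ((n θ ^ q / 129) ^ (2:ℝ))
      ≤ 16 * ∫⁻ θ in S, ENNReal.ofReal (g θ ^ 2) := by
    rw [hlayer]
    calc ENNReal.ofReal 2 * ∫⁻ μ in Ioi (0:ℝ), (volume.restrict S) {θ | μ < n θ ^ q / 129} *
            ENNReal.ofReal (μ ^ ((2:ℝ) - 1))
        ≤ ENNReal.ofReal 2 * ∫⁻ μ in Ioi (0:ℝ), 8 * ∫⁻ ψ in S, h μ ψ := by
          gcongr ENNReal.ofReal 2 * ?_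
          refine setLIntegral_mono' measurableSet_Ioi fun μ hμ => ?_
          rw [Measure.restrict_apply (measurableSet_lt measurable_const hNm), mul_comm,
            show (2:ℝ) - 1 = 1 by norm_num, Real.rpow_one]
          refine le_trans ?_ (maximal_weak_type (hhper μ) (ENNReal.ofReal μ))
          gcongr
          rintro θ ⟨h1, h2⟩
          exact hnB μ hμ θ h2 h1
      _ = 16 * ∫⁻ ψ in S, ∫⁻ μ in Ioi (0:ℝ), h μ ψ := by
          rw [lintegral_const_mul' _ _ (by norm_num), ← mul_assoc, lintegral_lintegral_swap,
            show ENNReal.ofReal 2 = 2 by simp]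
          · norm_num
          · refine Measurable.aemeasurable ?_
            have : Measurable ({x : ℝ × ℝ | x.1 < g x.2}.indicator
                fun x => ENNReal.ofReal (g x.2)) :=
              (hgc.measurable.comp measurable_snd).ennreal_ofReal.indicator
                (measurableSet_lt measurable_fst (hgc.measurable.comp measurable_snd))
            exact this
      _ = _ := by
          congr 1
          refine lintegral_congr fun ψ => ?_
          have e : ∫⁻ μ in Ioi (0:ℝ), h μ ψ
              = ∫⁻ μ in Ioi (0:ℝ), (Iio (g ψ)).indicator (fun _ => ENNReal.ofReal (g ψ)) μ := by
            refine lintegral_congr fun μ => ?_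
            simp only [hh, indicator, mem_ofPred_eq, mem_Iio]
          rw [e, setLIntegral_indicator measurableSet_Iio, setLIntegral_const,
            inter_comm, Ioi_inter_Iio, Real.volume_Ioo, sub_zero, ← ENNReal.ofReal_mul (hg0 ψ), sq]
  have e1 : ∀ θ, ENNReal.ofReal (n θ ^ p)
      = ENNReal.ofReal (129 ^ 2) * ENNReal.ofReal ((n θ ^ q / 129) ^ (2:ℝ)) := by
    intro θ
    rw [← ENNReal.ofReal_mul (by positivity)]
    congr 1
    rw [Real.rpow_two, div_pow, ← Real.rpow_mul_natCast (hn0 θ)]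
    rw [show q * ((2:ℕ):ℝ) = p by rw [hq]; push_cast; ring]
    field_simp
  have e2 : ∀ θ, g θ ^ 2 = ‖f (Complex.exp (θ * Complex.I))‖ ^ p := by
    intro θ
    rw [hg, ← Real.rpow_mul_natCast (norm_nonneg _)]
    rw [show q * ((2:ℕ):ℝ) = p by rw [hq]; push_cast; ring]
  simp_rw [e1]
  rw [lintegral_const_mul' _ _ ENNReal.ofReal_ne_top]
  simp only [e2] at hkey
  refine (mul_le_mul_right hkey _).trans (le_of_eq ?_)
  rw [← mul_assoc, ENNReal.ofReal_mul (by norm_num), show ENNReal.ofReal 16 = 16 by simp]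
  ring

/-! ### Polar coordinates and radial weights -/

/-- Null sets of radii sweep out null sets of the plane. -/
lemma volume_norm_preimage_eq_zero {A : Set ℝ} (hA : volume A = 0) :
    volume {z : ℂ | ‖z‖ ∈ A} = 0 := by
  obtain ⟨B, hAB, hBm, hB⟩ := exists_measurable_superset_of_null hA
  refine measure_mono_null (t := {z : ℂ | ‖z‖ ∈ B}) (fun z hz => hAB hz) ?_
  have hm : MeasurableSet {z : ℂ | ‖z‖ ∈ B} := measurable_norm hBm
  rw [← lintegral_indicator_one hm, ← Complex.lintegral_comp_polarCoord_symm]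
  have h0 : ∀ᵐ q : ℝ × ℝ ∂(volume : Measure (ℝ × ℝ)), q.1 ∉ B := by
    have : volume (B ×ˢ (univ : Set ℝ)) = 0 := by
      rw [Measure.volume_eq_prod, Measure.prod_prod, hB, zero_mul]
    rw [ae_iff]
    refine measure_mono_null (fun q hq => ?_) this
    exact ⟨not_not.mp hq, mem_univ _⟩
  have hms : MeasurableSet polarCoord.target := polarCoord.open_target.measurableSet
  refine (lintegral_congr_ae (g := fun _ => 0) ?_).trans lintegral_zero
  filter_upwards [ae_restrict_of_ae h0, ae_restrict_mem hms] with q hq hqt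
  have hq0 : 0 < q.1 := by
    rw [polarCoord_target] at hqt; exact hqt.1
  have : Complex.polarCoord.symm q ∉ {z : ℂ | ‖z‖ ∈ B} := by
    intro h
    apply hq
    have h2 : ‖Complex.polarCoord.symm q‖ ∈ B := h
    rwa [Complex.norm_polarCoord_symm, abs_of_pos hq0] at h2
  rw [indicator_of_notMem this]; simp

lemma setLIntegral_ball_polar {F : ℂ → ENNReal} (hF : Measurable F) {w : ℝ → ENNReal}
    (hw : Measurable w) :
    ∫⁻ z in Metric.ball (0 : ℂ) 1, F z * w ‖z‖ =
      ∫⁻ r in Ioo (0 : ℝ) 1, (ENNReal.ofReal r * w r) *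
        ∫⁻ θ in Ioo (-Real.pi) Real.pi, F (r * Complex.exp (θ * Complex.I)) := by
  have hE : Measurable fun q : ℝ × ℝ => ((q.1 : ℂ) * Complex.exp (q.2 * Complex.I)) := by
    fun_prop
  rw [← lintegral_indicator Metric.isOpen_ball.measurableSet,
    ← Complex.lintegral_comp_polarCoord_symm, polarCoord_target]
  have hms : MeasurableSet (Ioi (0 : ℝ) ×ˢ Ioo (-Real.pi) Real.pi) :=
    measurableSet_Ioi.prod measurableSet_Ioo
  have h1 : ∫⁻ q in Ioi (0 : ℝ) ×ˢ Ioo (-Real.pi) Real.pi, ENNReal.ofReal q.1 •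
        (Metric.ball (0 : ℂ) 1).indicator (fun z => F z * w ‖z‖) (Complex.polarCoord.symm q) =
      ∫⁻ q in Ioi (0 : ℝ) ×ˢ Ioo (-Real.pi) Real.pi, (Ioo (0 : ℝ) 1).indicator
        (fun r => ENNReal.ofReal r * w r) q.1 * F (q.1 * Complex.exp (q.2 * Complex.I)) := by
    refine setLIntegral_congr_fun hms fun q hq => ?_
    have hq0 : 0 < q.1 := hq.1
    have he : Complex.polarCoord.symm q = q.1 * Complex.exp (q.2 * Complex.I) := by
      rw [Complex.polarCoord_symm_apply, Complex.exp_mul_I, Complex.ofReal_cos, Complex.ofReal_sin]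
    have hn : ‖Complex.polarCoord.symm q‖ = q.1 := by
      rw [Complex.norm_polarCoord_symm, abs_of_pos hq0]
    by_cases h : q.1 < 1
    · have hb : Complex.polarCoord.symm q ∈ Metric.ball (0 : ℂ) 1 := by
        rw [mem_ball_zero_iff, hn]; exact h
      have hi : q.1 ∈ Ioo (0 : ℝ) 1 := ⟨hq0, h⟩
      simp only [indicator_of_mem hb, indicator_of_mem hi, hn, smul_eq_mul]
      rw [he]; ring
    · have hb : Complex.polarCoord.symm q ∉ Metric.ball (0 : ℂ) 1 := by
        rw [mem_ball_zero_iff, hn]; exact h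
      have hi : q.1 ∉ Ioo (0 : ℝ) 1 := fun h' => h h'.2
      simp only [indicator_of_notMem hb, indicator_of_notMem hi, smul_zero, zero_mul]
  have hg : Measurable ((Ioo (0 : ℝ) 1).indicator (fun r => ENNReal.ofReal r * w r)) :=
    (Measurable.mul ENNReal.measurable_ofReal hw).indicator measurableSet_Ioo
  have hprod : Measurable fun q : ℝ × ℝ => (Ioo (0 : ℝ) 1).indicator
      (fun r => ENNReal.ofReal r * w r) q.1 * F (q.1 * Complex.exp (q.2 * Complex.I)) :=
    (hg.comp measurable_fst).mul (hF.comp hE)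
  rw [h1, Measure.volume_eq_prod, ← Measure.prod_restrict, lintegral_prod _ hprod.aemeasurable]
  have h2 : ∀ r : ℝ, ∫⁻ θ in Ioo (-Real.pi) Real.pi, (Ioo (0 : ℝ) 1).indicator
        (fun r => ENNReal.ofReal r * w r) r * F (r * Complex.exp (θ * Complex.I)) =
      (Ioo (0 : ℝ) 1).indicator (fun r => (ENNReal.ofReal r * w r) *
        ∫⁻ θ in Ioo (-Real.pi) Real.pi, F (r * Complex.exp (θ * Complex.I))) r := by
    intro r
    have hFr : Measurable fun θ : ℝ => F (r * Complex.exp (θ * Complex.I)) :=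
      hF.comp (by fun_prop)
    rw [lintegral_const_mul _ hFr]
    by_cases h : r ∈ Ioo (0 : ℝ) 1
    · rw [indicator_of_mem h, indicator_of_mem h]
    · rw [indicator_of_notMem h, indicator_of_notMem h, zero_mul]
  simp only [h2]
  rw [lintegral_indicator measurableSet_Ioo, Measure.restrict_restrict measurableSet_Ioo,
    inter_eq_self_of_subset_left Ioo_subset_Ioi_self]

lemma setLIntegral_ball_le_of_circles {F G : ℂ → ENNReal} (hF : Measurable F) (hG : Measurable G)
    {w : ℝ → ENNReal} (hw : Measurable w) {C : ENNReal} (hC : C ≠ ⊤)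
    (h : ∀ r ∈ Ioo (0 : ℝ) 1,
      ∫⁻ θ in Ioo (-Real.pi) Real.pi, F (r * Complex.exp (θ * Complex.I)) ≤
        C * ∫⁻ θ in Ioo (-Real.pi) Real.pi, G (r * Complex.exp (θ * Complex.I))) :
    ∫⁻ z in Metric.ball (0 : ℂ) 1, F z * w ‖z‖ ≤
      C * ∫⁻ z in Metric.ball (0 : ℂ) 1, G z * w ‖z‖ := by
  rw [setLIntegral_ball_polar hF hw, setLIntegral_ball_polar hG hw, ← lintegral_const_mul' _ _ hC]
  refine setLIntegral_mono' measurableSet_Ioo fun r hr => ?_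
  calc _ ≤ (ENNReal.ofReal r * w r) * (C *
        ∫⁻ θ in Ioo (-Real.pi) Real.pi, G (r * Complex.exp (θ * Complex.I))) := by
        gcongr; exact h r hr
    _ = _ := by ring

/-! ### Measurability of the nontangential maximal function -/

lemma norm_lt_of_mem_stolz {ζ z : ℂ} (hζ : ζ ≠ 0) (hz : z ∈ Stolz ζ) : ‖z‖ < ‖ζ‖ := by
  have h : 0 < ‖ζ‖ := norm_pos_iff.mpr hζ
  have h1 := (abs_nonneg _).trans_lt hz.2
  have h2 : ‖z‖ / ‖ζ‖ < 1 := by linarith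
  rwa [div_lt_one h] at h2

lemma bddAbove_stolz_image {v : ℂ → ℝ} (hv : ContinuousOn v (Metric.ball (0 : ℂ) 1)) {ζ : ℂ}
    (hζ : ζ ≠ 0) (h1 : ‖ζ‖ < 1) : BddAbove ((fun z => |v z|) '' Stolz ζ) := by
  have hK : IsCompact (Metric.closedBall (0 : ℂ) ‖ζ‖) := isCompact_closedBall _ _
  have hsub : Metric.closedBall (0 : ℂ) ‖ζ‖ ⊆ Metric.ball 0 1 :=
    Metric.closedBall_subset_ball h1
  refine (hK.bddAbove_image (hv.mono hsub).abs).mono (image_mono fun z hz => ?_)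
  rw [mem_closedBall_zero_iff]
  exact (norm_lt_of_mem_stolz hζ hz).le

lemma ntang_nonneg (v : ℂ → ℝ) (ζ : ℂ) : 0 ≤ Ntang v ζ := by
  apply Real.sSup_nonneg
  rintro _ ⟨z, -, rfl⟩
  exact abs_nonneg _

lemma exists_mem_stolz_of_lt_ntang {v : ℂ → ℝ} {ζ : ℂ} {l : ℝ} (hl : 0 ≤ l)
    (h : l < Ntang v ζ) : ∃ z ∈ Stolz ζ, l < |v z| := by
  by_contra! hc
  refine absurd h (not_lt.mpr (Real.sSup_le ?_ hl))
  rintro _ ⟨z, hz, rfl⟩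
  exact hc z hz

/-- The nontangential maximal function restricted to the slit disc, where it is lower
semicontinuous; this is the measurable representative used in the integration. -/
noncomputable def slitNtang (v : ℂ → ℝ) : ℂ → ℝ :=
  (Metric.ball (0 : ℂ) 1 ∩ Complex.slitPlane).indicator (Ntang v)

lemma slitNtang_nonneg (v : ℂ → ℝ) (ζ : ℂ) : 0 ≤ slitNtang v ζ :=
  indicator_nonneg (fun z _ => ntang_nonneg v z) ζ

/-- Membership in the Stolz region is an open condition on its vertex away from the branch cut
of the argument, so the superlevel sets of the maximal function are open. -/
lemma measurable_slitNtang {v : ℂ → ℝ} (hv : ContinuousOn v (Metric.ball (0 : ℂ) 1)) :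
    Measurable (slitNtang v) := by
  refine measurable_of_Ioi fun a => ?_
  rcases lt_or_ge a 0 with ha | ha
  · have : slitNtang v ⁻¹' Ioi a = univ :=
      eq_univ_of_forall fun ζ => ha.trans_le (slitNtang_nonneg v ζ)
    rw [this]; exact MeasurableSet.univ
  · refine IsOpen.measurableSet ?_
    rw [isOpen_iff_mem_nhds]
    intro ζ hζ
    have hζ' : a < slitNtang v ζ := hζ
    have hmem : ζ ∈ Metric.ball (0 : ℂ) 1 ∩ Complex.slitPlane := by
      by_contra hn
      rw [slitNtang, indicator_of_notMem hn] at hζ'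
      exact absurd ha (not_le.mpr hζ')
    rw [slitNtang, indicator_of_mem hmem] at hζ'
    obtain ⟨z, hz, hza⟩ := exists_mem_stolz_of_lt_ntang ha hζ'
    have hζ0 : ζ ≠ 0 := Complex.slitPlane_ne_zero hmem.2
    have hopen : IsOpen (Metric.ball (0 : ℂ) 1 ∩ Complex.slitPlane) :=
      Metric.isOpen_ball.inter Complex.isOpen_slitPlane
    have hc1 : ContinuousAt (fun u : ℂ => |Complex.arg u - Complex.arg z|) ζ :=
      ((Complex.continuousAt_arg hmem.2).sub continuousAt_const).abs
    have hc2 : ContinuousAt (fun u : ℂ => (1 / 2 : ℝ) * (1 - ‖z‖ / ‖u‖)) ζ :=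
      continuousAt_const.mul (continuousAt_const.sub
        (continuousAt_const.div continuous_norm.continuousAt (norm_ne_zero_iff.mpr hζ0)))
    filter_upwards [hopen.mem_nhds hmem, hc1.eventually_lt hc2 hz.2] with u hu hlt
    have hu0 : u ≠ 0 := Complex.slitPlane_ne_zero hu.2
    show a < slitNtang v u
    rw [slitNtang, indicator_of_mem hu]
    exact hza.trans_le (le_csSup (bddAbove_stolz_image hv hu0 (mem_ball_zero_iff.mp hu.1))
      ⟨z, ⟨hz.1, hlt⟩, rfl⟩)

lemma slitNtang_ae_eq (v : ℂ → ℝ) :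
    slitNtang v =ᵐ[volume.restrict (Metric.ball (0 : ℂ) 1)] Ntang v := by
  have hnull : volume (Complex.slitPlaneᶜ) = 0 := by
    have h := Measure.addHaar_submodule (volume : Measure ℂ) (LinearMap.ker Complex.imLm) (by
      intro h
      have : Complex.I ∈ LinearMap.ker Complex.imLm := h ▸ Submodule.mem_top
      simp at this)
    refine measure_mono_null (fun z hz => ?_) h
    rw [mem_compl_iff, Complex.mem_slitPlane_iff, not_or, not_not] at hz
    simpa using hz.2
  have h1 : ∀ᵐ z : ℂ, z ∈ Complex.slitPlane := by
    rw [ae_iff]; exact hnull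
  filter_upwards [ae_restrict_of_ae h1, ae_restrict_mem Metric.isOpen_ball.measurableSet]
    with z hz hb
  exact indicator_of_mem (show z ∈ Metric.ball (0 : ℂ) 1 ∩ Complex.slitPlane from ⟨hb, hz⟩) _

lemma arg_polar {r θ : ℝ} (hr : 0 < r) (hθ : θ ∈ Ioo (-Real.pi) Real.pi) :
    Complex.arg (r * Complex.exp (θ * Complex.I)) = θ := by
  rw [Complex.exp_mul_I]
  exact Complex.arg_mul_cos_add_sin_mul_I hr ⟨hθ.1, hθ.2.le⟩

lemma norm_polar {r θ : ℝ} (hr : 0 ≤ r) : ‖(r : ℂ) * Complex.exp (θ * Complex.I)‖ = r := by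
  rw [norm_mul, Complex.norm_exp_ofReal_mul_I, mul_one, Complex.norm_real, Real.norm_of_nonneg hr]

lemma slitNtang_polar (v : ℂ → ℝ) {r θ : ℝ} (hr : r ∈ Ioo (0 : ℝ) 1)
    (hθ : θ ∈ Ioo (-Real.pi) Real.pi) :
    slitNtang v (r * Complex.exp (θ * Complex.I)) = Ntang v (r * Complex.exp (θ * Complex.I)) := by
  have hmem : (r : ℂ) * Complex.exp (θ * Complex.I) ∈
      Metric.ball (0 : ℂ) 1 ∩ Complex.slitPlane := by
    refine ⟨?_, ?_⟩
    · rw [mem_ball_zero_iff, norm_polar hr.1.le]; exact hr.2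
    · rw [Complex.mem_slitPlane_iff_arg, arg_polar hr.1 hθ]
      refine ⟨hθ.2.ne, ?_⟩
      rw [← norm_ne_zero_iff, norm_polar hr.1.le]; exact hr.1.ne'
  exact indicator_of_mem hmem _

lemma toReal_le_of_le_of_le {A B : ENNReal} {C D : ℝ} (hC : 0 ≤ C)
    (h1 : A ≤ ENNReal.ofReal C * B) (h2 : B ≤ ENNReal.ofReal D * A) :
    A.toReal ≤ C * B.toReal := by
  by_cases hB : B = ⊤
  · have hA : A = ⊤ := by
      by_contra hA
      exact absurd (h2.trans_lt (ENNReal.mul_lt_top ENNReal.ofReal_lt_top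
        (lt_top_iff_ne_top.mpr hA))) (by simp [hB])
    simp [hA, hB]
  · have := ENNReal.toReal_mono (ENNReal.mul_ne_top ENNReal.ofReal_ne_top hB) h1
    rwa [ENNReal.toReal_mul, ENNReal.toReal_ofReal hC] at this

/-! ### Assembling the circles -/

lemma differentiableOn_dilation {f : ℂ → ℂ} (hf : DifferentiableOn ℂ f (Metric.ball (0 : ℂ) 1))
    {r : ℝ} (hr : 0 < r) :
    DifferentiableOn ℂ (fun z : ℂ => f (r * z)) (Metric.ball (0 : ℂ) r⁻¹) := by
  refine hf.comp (by fun_prop) fun z hz => ?_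
  rw [mem_ball_zero_iff] at hz ⊢
  rw [norm_mul, Complex.norm_real, Real.norm_of_nonneg hr.le]
  calc r * ‖z‖ < r * r⁻¹ := by gcongr
    _ = 1 := mul_inv_cancel₀ hr.ne'

/-- The dilation `z ↦ f (r z)` turns the Stolz regions with vertex on `|ζ| = r` into the cones
at the unit circle, so the maximal function on that circle dominates the dilated real part. -/
lemma dominatesCones_slitNtang {f : ℂ → ℂ} (hf : ContinuousOn f (Metric.ball (0 : ℂ) 1))
    {r : ℝ} (hr : r ∈ Ioo (0 : ℝ) 1) :
    DominatesCones (fun z => (f (r * z)).re)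
      (fun θ => slitNtang (fun w => (f w).re) (r * Complex.exp (θ * Complex.I))) := by
  intro θ hθ φ hφ ρ hρ hρ1 hlt
  have hv : ContinuousOn (fun w => (f w).re) (Metric.ball (0 : ℂ) 1) :=
    Complex.continuous_re.comp_continuousOn hf
  have hn : ‖(r : ℂ) * Complex.exp (θ * Complex.I)‖ = r := norm_polar hr.1.le
  have h0 : (r : ℂ) * Complex.exp (θ * Complex.I) ≠ 0 := by
    rw [← norm_ne_zero_iff, hn]; exact hr.1.ne'
  simp only [slitNtang_polar _ hr hθ]
  refine le_csSup (bddAbove_stolz_image hv h0 (hn.trans_lt hr.2))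
    ⟨r * (ρ * Complex.exp (φ * Complex.I)), ?_, rfl⟩
  have he : (r : ℂ) * (ρ * Complex.exp (φ * Complex.I)) =
      ((r * ρ : ℝ) : ℂ) * Complex.exp (φ * Complex.I) := by push_cast; ring
  have hrρ : 0 < r * ρ := mul_pos hr.1 hρ
  rw [he]
  refine ⟨?_, ?_⟩
  · rw [norm_polar hrρ.le]; nlinarith [hr.1, hr.2]
  · rw [hn, norm_polar hrρ.le, arg_polar hr.1 hθ, arg_polar hrρ hφ, mul_div_cancel_left₀ _ hr.1.ne']
    exact hlt

lemma exists_cone_of_lt_slitNtang {f : ℂ → ℂ} {r : ℝ} (hr : r ∈ Ioo (0 : ℝ) 1) {θ : ℝ}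
    (hθ : θ ∈ Ioo (-Real.pi) Real.pi) {l : ℝ} (hl : 0 ≤ l)
    (h : l < slitNtang (fun w => (f w).re) (r * Complex.exp (θ * Complex.I))) :
    ∃ φ ρ : ℝ, 0 ≤ ρ ∧ ρ < 1 ∧ |θ - φ| < 1 / 2 * (1 - ρ) ∧
      l < ‖f (r * (ρ * Complex.exp (φ * Complex.I)))‖ := by
  rw [slitNtang_polar _ hr hθ] at h
  obtain ⟨z, hz, hlz⟩ := exists_mem_stolz_of_lt_ntang hl h
  have hn : ‖(r : ℂ) * Complex.exp (θ * Complex.I)‖ = r := norm_polar hr.1.le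
  have h0 : (r : ℂ) * Complex.exp (θ * Complex.I) ≠ 0 := by
    rw [← norm_ne_zero_iff, hn]; exact hr.1.ne'
  have hzr : ‖z‖ < r := hn ▸ norm_lt_of_mem_stolz h0 hz
  refine ⟨Complex.arg z, ‖z‖ / r, by have := hr.1; positivity, (div_lt_one hr.1).mpr hzr, ?_, ?_⟩
  · have h2 := hz.2
    rwa [hn, arg_polar hr.1 hθ] at h2
  · have hr' : (r : ℂ) ≠ 0 := Complex.ofReal_ne_zero.mpr hr.1.ne'
    have he : (r : ℂ) * (((‖z‖ / r : ℝ) : ℂ) * Complex.exp (Complex.arg z * Complex.I)) = z := by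
      rw [← mul_assoc]
      push_cast
      rw [mul_div_cancel₀ _ hr', Complex.norm_mul_exp_arg_mul_I]
    rw [he]
    exact hlz.trans_le (Complex.abs_re_le_norm _)

/-- Integrals against a radial weight are lower integrals against a measurable representative of
the weight. This holds for divergent integrals too, both sides being then zero. -/
lemma integral_radial_eq {ω : ℝ → ℝ} (hω : ∀ r ∈ Ico (0 : ℝ) 1, 0 ≤ ω r) {ω' : ℝ → ℝ}
    (hω' : Measurable ω') (hae : ω =ᵐ[volume.restrict (Ico (0 : ℝ) 1)] ω')
    {g : ℂ → ℝ} (hg0 : ∀ z, 0 ≤ g z) {h : ℂ → ℝ} (hh : Measurable h)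
    (hgh : g =ᵐ[volume.restrict (Metric.ball (0 : ℂ) 1)] h) :
    ∫ z in Metric.ball (0 : ℂ) 1, g z * ω ‖z‖ =
      (∫⁻ z in Metric.ball (0 : ℂ) 1, ENNReal.ofReal (h z) * ENNReal.ofReal (ω' ‖z‖)).toReal := by
  have hb : MeasurableSet (Metric.ball (0 : ℂ) 1) := Metric.isOpen_ball.measurableSet
  have hωae : ∀ᵐ z ∂(volume.restrict (Metric.ball (0 : ℂ) 1)), ω ‖z‖ = ω' ‖z‖ := by
    rw [Filter.EventuallyEq, ae_restrict_iff' measurableSet_Ico, ae_iff] at hae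
    have h1 : ∀ᵐ z : ℂ, ‖z‖ ∉ {r : ℝ | ¬(r ∈ Ico (0 : ℝ) 1 → ω r = ω' r)} := by
      rw [ae_iff]
      simpa using volume_norm_preimage_eq_zero hae
    filter_upwards [ae_restrict_of_ae h1, ae_restrict_mem hb] with z hz hzb
    exact (not_not.mp hz) ⟨norm_nonneg z, mem_ball_zero_iff.mp hzb⟩
  have hcongr : (fun z => g z * ω ‖z‖) =ᵐ[volume.restrict (Metric.ball (0 : ℂ) 1)]
      fun z => h z * ω' ‖z‖ := by
    filter_upwards [hgh, hωae] with z h1 h2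
    rw [h1, h2]
  have hm : Measurable fun z : ℂ => h z * ω' ‖z‖ := hh.mul (hω'.comp measurable_norm)
  have hnn : 0 ≤ᵐ[volume.restrict (Metric.ball (0 : ℂ) 1)] fun z => h z * ω' ‖z‖ := by
    filter_upwards [hcongr, ae_restrict_mem hb] with z hz hzb
    rw [← hz]
    exact mul_nonneg (hg0 z) (hω _ ⟨norm_nonneg z, mem_ball_zero_iff.mp hzb⟩)
  rw [integral_congr_ae hcongr, integral_eq_lintegral_of_nonneg_ae hnn hm.aestronglyMeasurable]
  congr 1
  refine lintegral_congr_ae ?_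
  filter_upwards [hgh] with z h1
  exact ENNReal.ofReal_mul (h1 ▸ hg0 z)

/-- For `0 < p < ∞` and a radial weight `ω`, there is `C = C(p) > 0` with
`C⁻¹ ‖f‖_{A^p_ω} ≤ ‖N(Re f)‖_{L^p_ω} ≤ C ‖f‖_{A^p_ω}` for every analytic `f` on `𝔻`
with `Im f(0) = 0` (norms stated via their `p`-th powers). -/
theorem statement0 (p : ℝ) (hp : 0 < p) :
    ∃ C : ℝ, 0 < C ∧ ∀ ω : ℝ → ℝ, RadialWeight ω →
      ∀ f : ℂ → ℂ, DifferentiableOn ℂ f (Metric.ball (0:ℂ) 1) → (f 0).im = 0 →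
        C⁻¹ * ApNorm p ω f ≤ NpNorm p ω f ∧ NpNorm p ω f ≤ C * ApNorm p ω f := by
  obtain ⟨C₁, hC₁, hlow⟩ := lower_bound_circle p hp
  obtain ⟨C₂, hC₂, hup⟩ := upper_bound_circle p hp
  refine ⟨max C₁ C₂, lt_max_of_lt_left hC₁, ?_⟩
  intro ω hω f hf hf0
  have hC : 0 < max C₁ C₂ := lt_max_of_lt_left hC₁
  obtain ⟨ω', hω'm, hae⟩ := hω.2.1.aestronglyMeasurable.aemeasurable
  have hfc : ContinuousOn f (Metric.ball (0 : ℂ) 1) := hf.continuousOn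
  have hv : ContinuousOn (fun w => (f w).re) (Metric.ball (0 : ℂ) 1) :=
    Complex.continuous_re.comp_continuousOn hfc
  have hb : MeasurableSet (Metric.ball (0 : ℂ) 1) := Metric.isOpen_ball.measurableSet
  set f' : ℂ → ℂ := (Metric.ball (0 : ℂ) 1).indicator f with hf'
  have hf'm : Measurable f' := by
    classical
    rw [hf', ← piecewise_eq_indicator]
    exact hfc.measurable_piecewise continuousOn_const hb
  have hfm : Measurable fun z => ‖f' z‖ ^ p := hf'm.norm.pow_const p
  set n : ℂ → ℝ := slitNtang (fun w => (f w).re) with hn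
  have hnm : Measurable n := measurable_slitNtang hv
  have hnpm : Measurable fun z => n z ^ p := hnm.pow_const p
  have hA := integral_radial_eq hω.1 hω'm hae (g := fun z => ‖f z‖ ^ p) (fun z => by positivity)
    hfm (by
      filter_upwards [ae_restrict_mem hb] with z hz
      rw [hf', indicator_of_mem hz])
  have hN := integral_radial_eq hω.1 hω'm hae
    (g := fun z => Ntang (fun w => (f w).re) z ^ p)
    (fun z => Real.rpow_nonneg (ntang_nonneg _ z) p) hnpm (by
      filter_upwards [slitNtang_ae_eq fun w => (f w).re] with z hz
      rw [hn, hz])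
  have hfr : ∀ r ∈ Ioo (0 : ℝ) 1, ∀ θ : ℝ,
      f' (r * Complex.exp (θ * Complex.I)) = f (r * Complex.exp (θ * Complex.I)) := by
    intro r hr θ
    refine indicator_of_mem ?_ _
    rw [mem_ball_zero_iff, norm_polar hr.1.le]; exact hr.2
  have hwm : Measurable fun r => ENNReal.ofReal (ω' r) := hω'm.ennreal_ofReal
  have hpolm : ∀ r : ℝ, Measurable fun θ : ℝ => n (r * Complex.exp (θ * Complex.I)) :=
    fun r => hnm.comp (by fun_prop)
  have h1 := setLIntegral_ball_le_of_circles (F := fun z => ENNReal.ofReal (‖f' z‖ ^ p))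
    (G := fun z => ENNReal.ofReal (n z ^ p)) hfm.ennreal_ofReal hnpm.ennreal_ofReal hwm
    (C := ENNReal.ofReal (max C₁ C₂)) ENNReal.ofReal_ne_top (by
      intro r hr
      simp only [hfr r hr]
      refine (hlow r⁻¹ ((one_lt_inv₀ hr.1).mpr hr.2) (fun z => f (r * z))
        (differentiableOn_dilation hf hr.1) (by simpa using hf0) _ (hpolm r)
        (fun θ => slitNtang_nonneg _ _) (dominatesCones_slitNtang hfc hr)).trans ?_
      gcongr
      exact le_max_left _ _)
  have h2 := setLIntegral_ball_le_of_circles (G := fun z => ENNReal.ofReal (‖f' z‖ ^ p))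
    (F := fun z => ENNReal.ofReal (n z ^ p)) hnpm.ennreal_ofReal hfm.ennreal_ofReal hwm
    (C := ENNReal.ofReal (max C₁ C₂)) ENNReal.ofReal_ne_top (by
      intro r hr
      simp only [hfr r hr]
      refine (hup r⁻¹ ((one_lt_inv₀ hr.1).mpr hr.2) (fun z => f (r * z))
        (differentiableOn_dilation hf hr.1) _ (hpolm r)
        (fun θ => slitNtang_nonneg _ _)
        (fun θ hθ l hl h => exists_cone_of_lt_slitNtang hr hθ hl h)).trans ?_
      gcongr
      exact le_max_right _ _)
  have e1 := toReal_le_of_le_of_le hC.le h1 h2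
  have e2 := toReal_le_of_le_of_le hC.le h2 h1
  rw [← hA, ← hN] at e1 e2
  have hπ : 0 < Real.pi⁻¹ := inv_pos.mpr Real.pi_pos
  unfold ApNorm NpNorm
  refine ⟨?_, ?_⟩
  · rw [inv_mul_le_iff₀ hC, mul_left_comm]
    exact mul_le_mul_of_nonneg_left e1 hπ.le
  · rw [mul_left_comm]
    exact mul_le_mul_of_nonneg_left e2 hπ.le
end

section
/- There exists a radial weight ω such that ω ∉ D̂ but its associated weight ω̃ belongs to D̂ (in particular ω̃ is a weight). -/
/-!
Write `t = 1 - r` for the distance to the boundary. The weight is a sum of bumps: the `n`-th one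
has mass `1 / n!` and lives on `t_n / 2 ≤ t < t_n`, where `t_n = 2 ^ (-3 n²)`.

* Between `t_n / 2` and `t_n` the tail `ω̂` drops from at least `1 / n!` to at most `e / (n + 1)!`
  (`le_tailInt`, `tailInt_le`), so doubling fails for `ω`.
* By Tonelli, `∫ ω̂(r) / (1 - r) dr` is at most `∑ (1 / n!) log (2 / t_n)`, which is finite since
  `log (2 / t_n)` grows only quadratically (`integrableOn_assocW`).
* If the `n`-th bump is the first one reaching beyond `r`, then `ω̂(r) ≤ e / n!`, hence
  `∫ ω̃ ≤ e / n!` over `[r, (1 + r) / 2]`. On the plateau `t_{n+1} ≤ t ≤ t_n / 4` the tail is at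
  least `1 / (n + 1)!`, and the plateau has `dt / t`-length `(6 n + 1) log 2 ≥ (n + 1) log 2`, so
  the tail of `ω̃` at `(1 + r) / 2` is at least `log 2 / n!` (`le_tailInt_assocW`). Therefore `ω̃`
  is doubling.
-/

open MeasureTheory Set

/-- The distance to `1` of the left endpoint of the `n`-th bump. -/
noncomputable def dist1 (n : ℕ) : ℝ := (1 / 2) ^ (3 * n ^ 2)

/-- The `n`-th bump: mass `1 / n!` spread uniformly over `1 - s ∈ [dist1 n / 2, dist1 n)`. -/
noncomputable def bump (n : ℕ) : ℝ → ℝ :=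
  (Ioc (1 - dist1 n) (1 - dist1 n / 2)).indicator fun _ => 2 / (dist1 n * n.factorial)

/-- Closed form of the tail of the `n`-th bump, see `tailInt_bump`. -/
noncomputable def bumpTail (n : ℕ) (r : ℝ) : ℝ :=
  2 / (dist1 n * n.factorial) * max (1 - dist1 n / 2 - max (1 - dist1 n) r) 0

/-- The weight of the example: the sum of all bumps. -/
noncomputable def bumpWeight (s : ℝ) : ℝ := ∑' n, bump n s

lemma dist1_pos (n : ℕ) : 0 < dist1 n := by unfold dist1; positivity

lemma dist1_le_one (n : ℕ) : dist1 n ≤ 1 := by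
  unfold dist1; exact pow_le_one₀ (by norm_num) (by norm_num)

lemma dist1_succ (n : ℕ) : dist1 (n + 1) = dist1 n * (1 / 2) ^ (6 * n + 3) := by
  unfold dist1; rw [← pow_add]; ring_nf

lemma dist1_succ_le (n : ℕ) : dist1 (n + 1) ≤ dist1 n / 8 := by
  rw [dist1_succ]
  have : ((1:ℝ) / 2) ^ (6 * n + 3) ≤ (1 / 2) ^ 3 :=
    pow_le_pow_of_le_one (by norm_num) (by norm_num) (by omega)
  nlinarith [dist1_pos n]

lemma dist1_antitone : Antitone dist1 :=
  antitone_nat_of_succ_le fun n => by linarith [dist1_succ_le n, dist1_pos n]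

lemma bump_nonneg (n : ℕ) (s : ℝ) : 0 ≤ bump n s := by
  have := dist1_pos n
  exact indicator_nonneg (fun _ _ => by positivity) s

lemma integrable_bump (n : ℕ) : Integrable (bump n) := by
  unfold bump
  rw [integrable_indicator_iff measurableSet_Ioc]
  simp

lemma tailInt_bump (n : ℕ) {r : ℝ} (hr : r ≤ 1) : tailInt (bump n) r = bumpTail n r := by
  have hp := dist1_pos n
  unfold tailInt bump bumpTail
  rw [intervalIntegral.integral_of_le hr, setIntegral_indicator measurableSet_Ioc,
    Ioc_inter_Ioc, setIntegral_const, Real.volume_real_Ioc, smul_eq_mul, mul_comm,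
    min_eq_right (by linarith), max_comm r]

lemma bumpTail_nonneg (n : ℕ) (r : ℝ) : 0 ≤ bumpTail n r := by
  have := dist1_pos n
  unfold bumpTail; positivity

lemma bumpTail_antitone (n : ℕ) : Antitone (bumpTail n) := by
  intro a b h
  have := dist1_pos n
  unfold bumpTail; gcongr

lemma bumpTail_full (n : ℕ) {r : ℝ} (hr : r ≤ 1 - dist1 n) :
    bumpTail n r = 1 / n.factorial := by
  have := dist1_pos n
  have h2 : (n.factorial : ℝ) ≠ 0 := by positivity
  unfold bumpTail
  rw [max_eq_left hr, max_eq_left (by linarith)]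
  field_simp; ring

lemma bumpTail_le (n : ℕ) (r : ℝ) : bumpTail n r ≤ 1 / n.factorial := by
  rw [← bumpTail_full n (min_le_right r _)]
  exact bumpTail_antitone n (min_le_left _ _)

lemma bumpTail_zero (n : ℕ) {r : ℝ} (hr : 1 - dist1 n / 2 ≤ r) : bumpTail n r = 0 := by
  have : 1 - dist1 n / 2 - max (1 - dist1 n) r ≤ 0 := by
    linarith [le_max_right (1 - dist1 n) r]
  unfold bumpTail
  rw [max_eq_right this, mul_zero]

lemma summable_inv_factorial : Summable fun n : ℕ => 1 / (n.factorial : ℝ) := by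
  simpa using Real.summable_pow_div_factorial 1

lemma hasSum_bumpTail {r : ℝ} (hr : r ≤ 1) :
    HasSum (fun n => bumpTail n r) (tailInt bumpWeight r) := by
  have key : ∀ n, ∫ s in Ioc r 1, bump n s = bumpTail n r := fun n => by
    rw [← tailInt_bump n hr, tailInt, intervalIntegral.integral_of_le hr]
  have := hasSum_integral_of_summable_integral_norm (μ := volume.restrict (Ioc r 1)) (F := bump)
    (fun n => (integrable_bump n).restrict) (by
      simp_rw [Real.norm_of_nonneg (bump_nonneg _ _), key]
      exact summable_inv_factorial.of_nonneg_of_le (fun n => bumpTail_nonneg n r)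
        fun n => bumpTail_le n r)
  simp_rw [key] at this
  rw [tailInt, intervalIntegral.integral_of_le hr]
  exact this

lemma le_tailInt (n : ℕ) {r : ℝ} (hr : r ≤ 1 - dist1 n) :
    1 / (n.factorial : ℝ) ≤ tailInt bumpWeight r := by
  rw [← bumpTail_full n hr]
  exact le_hasSum (hasSum_bumpTail (by linarith [dist1_pos n])) n
    fun k _ => bumpTail_nonneg k r

/-- If only the bumps of index `≥ n` reach beyond `r`, the tail at `r` is comparable to the mass
of the `n`-th bump, since `1 / (n + j)! ≤ 1 / (n! j!)`. -/
lemma tailInt_le (n : ℕ) {r : ℝ} (hr : r ≤ 1) (h : ∀ k < n, 1 - dist1 k / 2 ≤ r) :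
    tailInt bumpWeight r ≤ Real.exp 1 * (1 / n.factorial) := by
  have h1 := (hasSum_nat_add_iff' n).2 (hasSum_bumpTail hr)
  rw [Finset.sum_eq_zero fun k hk => bumpTail_zero k (h k (Finset.mem_range.1 hk)), sub_zero] at h1
  have h2 : HasSum (fun j : ℕ => 1 / (j.factorial : ℝ) * (1 / n.factorial))
      (Real.exp 1 * (1 / n.factorial)) := by
    have := NormedSpace.expSeries_div_hasSum_exp (1 : ℝ)
    rw [← Real.exp_eq_exp_ℝ] at this
    simpa using this.mul_right (1 / (n.factorial : ℝ))
  refine hasSum_le (fun j => (bumpTail_le _ _).trans ?_) h1 h2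
  rw [one_div_mul_one_div]
  refine one_div_le_one_div_of_le (by positivity) ?_
  rw [add_comm j n, mul_comm]
  exact_mod_cast Nat.le_of_dvd (Nat.factorial_pos _)
    (Nat.factorial_mul_factorial_dvd_factorial_add n j)

lemma tailInt_anti {a b : ℝ} (hab : a ≤ b) (hb : b ≤ 1) :
    tailInt bumpWeight b ≤ tailInt bumpWeight a :=
  hasSum_le (fun n => bumpTail_antitone n hab) (hasSum_bumpTail hb) (hasSum_bumpTail (hab.trans hb))

lemma tailInt_nonneg {r : ℝ} (hr : r ≤ 1) : 0 ≤ tailInt bumpWeight r :=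
  (hasSum_bumpTail hr).nonneg fun n => bumpTail_nonneg n r

lemma exists_dist1_lt {ε : ℝ} (hε : 0 < ε) : ∃ n, dist1 n < ε := by
  obtain ⟨n, hn⟩ := exists_pow_lt_of_lt_one hε (by norm_num : (1:ℝ) / 2 < 1)
  refine ⟨n, lt_of_le_of_lt ?_ hn⟩
  exact pow_le_pow_of_le_one (by norm_num) (by norm_num) (by nlinarith)

lemma tailInt_pos {r : ℝ} (hr : r < 1) : 0 < tailInt bumpWeight r := by
  obtain ⟨n, hn⟩ := exists_dist1_lt (sub_pos.2 hr)
  exact lt_of_lt_of_le (by positivity) (le_tailInt n (r := r) (by linarith))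

lemma radialWeight_bumpWeight : RadialWeight bumpWeight := by
  refine ⟨fun r _ => tsum_nonneg fun n => bump_nonneg n r, ?_, fun r hr => tailInt_pos hr.2⟩
  -- a nonzero Bochner integral forces integrability
  by_contra hni
  have h0 := tailInt_pos (r := 0) one_pos
  rw [tailInt, intervalIntegral.integral_of_le zero_le_one, ← integral_Ico_eq_integral_Ioc,
    integral_undef hni] at h0
  exact lt_irrefl _ h0

lemma not_dhat_bumpWeight : ¬ Dhat bumpWeight := by
  rintro ⟨C, hC, h⟩
  obtain ⟨n, hn⟩ := exists_nat_gt (C * Real.exp 1)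
  have hp := dist1_pos n
  have h1 := h (1 - dist1 n) ⟨by linarith [dist1_le_one n], by linarith⟩
  have h2 := le_tailInt n (le_refl (1 - dist1 n))
  have h3 := tailInt_le (n + 1) (r := (1 + (1 - dist1 n)) / 2) (by linarith) (fun k hk => by
    linarith [dist1_antitone (Nat.lt_succ_iff.1 hk)])
  have h4 : 1 / (n.factorial : ℝ) ≤ C * (Real.exp 1 * (1 / (n + 1).factorial)) :=
    (h2.trans h1).trans (by gcongr)
  have hf : (0:ℝ) < n.factorial := by positivity
  rw [Nat.factorial_succ] at h4
  push_cast at h4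
  have h5 : C * (Real.exp 1 * (1 / (((n:ℝ) + 1) * n.factorial)))
      = (C * Real.exp 1) / (n + 1) * (1 / n.factorial) := by field_simp
  rw [h5] at h4
  have h6 : C * Real.exp 1 / ((n:ℝ) + 1) < 1 := by
    rw [div_lt_one (by positivity)]; linarith
  have : C * Real.exp 1 / ((n:ℝ) + 1) * (1 / n.factorial) < 1 * (1 / n.factorial) := by
    gcongr
  linarith

lemma intervalIntegrable_inv_one_sub {a b : ℝ} (ha : a < 1) (hb : b < 1) :
    IntervalIntegrable (fun r : ℝ => (1 - r)⁻¹) volume a b := by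
  refine ContinuousOn.intervalIntegrable (ContinuousOn.inv₀ (by fun_prop) fun x hx => ?_)
  have := hx.2.trans_lt (max_lt ha hb)
  linarith

lemma integral_inv_one_sub {a b : ℝ} (ha : a < 1) (hb : b < 1) :
    ∫ r in a..b, (1 - r)⁻¹ = Real.log ((1 - a) / (1 - b)) := by
  rw [intervalIntegral.integral_comp_sub_left (fun x => x⁻¹) 1,
    integral_inv_of_pos (by linarith) (by linarith)]

lemma log_dist1 (n : ℕ) : Real.log (2 / dist1 n) = (3 * n ^ 2 + 1) * Real.log 2 := by
  have : 2 / dist1 n = 2 ^ (3 * n ^ 2 + 1) := by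
    unfold dist1; rw [one_div, inv_pow, div_inv_eq_mul, pow_succ' (2 : ℝ)]
  rw [this, Real.log_pow]; push_cast; ring

/-- The function associated with a single bump is integrable, with integral at most
`∫ dr / (n! (1 - r))` over `0 ≤ r ≤ 1 - dist1 n / 2`. -/
lemma integral_assoc_bump (n : ℕ) :
    IntegrableOn (fun r => bumpTail n r / (1 - r)) (Ioc 0 1) ∧
      ∫ r in Ioc 0 1, bumpTail n r / (1 - r)
        ≤ 1 / n.factorial * ((3 * n ^ 2 + 1) * Real.log 2) := by
  have hp := dist1_pos n
  have hp1 := dist1_le_one n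
  have hb0 : 0 ≤ 1 - dist1 n / 2 := by linarith
  have hb1 : 1 - dist1 n / 2 < 1 := by linarith
  set H : ℝ → ℝ := (Ioc 0 (1 - dist1 n / 2)).indicator
    fun r => 1 / n.factorial * (1 - r)⁻¹ with hH
  have hii : IntegrableOn (fun r : ℝ => 1 / (n.factorial : ℝ) * (1 - r)⁻¹)
      (Ioc 0 (1 - dist1 n / 2)) :=
    ((intervalIntegrable_iff_integrableOn_Ioc_of_le hb0).1
      (intervalIntegrable_inv_one_sub one_pos hb1)).const_mul _
  have hHi : Integrable H := (integrable_indicator_iff measurableSet_Ioc).2 hii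
  have hHint : ∫ r in Ioc 0 1, H r = 1 / n.factorial * ((3 * n ^ 2 + 1) * Real.log 2) := by
    rw [hH, setIntegral_indicator measurableSet_Ioc, Ioc_inter_Ioc, max_self,
      min_eq_right hb1.le, integral_const_mul, ← intervalIntegral.integral_of_le hb0,
      integral_inv_one_sub one_pos hb1, ← log_dist1]
    rw [sub_zero, sub_sub_cancel, one_div_div]
  have hle : ∀ r ∈ Ioc (0:ℝ) 1, bumpTail n r / (1 - r) ≤ H r := by
    intro r hr
    by_cases h : r ≤ 1 - dist1 n / 2
    · rw [hH, indicator_of_mem (mem_Ioc.2 ⟨hr.1, h⟩), div_eq_mul_inv]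
      exact mul_le_mul_of_nonneg_right (bumpTail_le n r) (inv_nonneg.2 (by linarith))
    · rw [bumpTail_zero n (not_le.1 h).le, zero_div, hH, indicator_of_notMem (fun h' => h h'.2)]
  have hint : IntegrableOn (fun r => bumpTail n r / (1 - r)) (Ioc 0 1) := by
    refine hHi.restrict.mono' ?_ ?_
    · exact ((bumpTail_antitone n).measurable.div (by fun_prop)).aestronglyMeasurable
    · refine (ae_restrict_iff' measurableSet_Ioc).2 (Filter.Eventually.of_forall fun r hr => ?_)
      rw [Real.norm_of_nonneg (div_nonneg (bumpTail_nonneg n r) (by linarith [hr.2]))]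
      exact hle r hr
  exact ⟨hint, hHint ▸ setIntegral_mono_on hint hHi.restrict measurableSet_Ioc hle⟩

lemma summable_log_masses :
    Summable fun n : ℕ => 1 / (n.factorial : ℝ) * ((3 * n ^ 2 + 1) * Real.log 2) := by
  have hl : 0 < Real.log 2 := Real.log_pos (by norm_num)
  refine ((Real.summable_pow_div_factorial 4).mul_left (4 * Real.log 2)).of_nonneg_of_le
    (fun n => by positivity) fun n => ?_
  have h1 : (n:ℝ) ≤ 2 ^ n := by exact_mod_cast Nat.lt_two_pow_self.le
  have h2 : (4:ℝ) ^ n = (2 ^ n) ^ 2 := by rw [← pow_mul, mul_comm, pow_mul]; norm_num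
  have h3 : (3 * (n:ℝ) ^ 2 + 1) ≤ 4 * 4 ^ n := by
    have : (1:ℝ) ≤ 4 ^ n := one_le_pow₀ (by norm_num)
    have : (n:ℝ) ^ 2 ≤ 4 ^ n := by rw [h2]; gcongr
    linarith
  calc 1 / (n.factorial : ℝ) * ((3 * n ^ 2 + 1) * Real.log 2)
      ≤ 1 / (n.factorial : ℝ) * ((4 * 4 ^ n) * Real.log 2) := by gcongr
    _ = _ := by ring

lemma integrableOn_assocW : IntegrableOn (assocW bumpWeight) (Ioc 0 1) := by
  have h := hasSum_integral_of_summable_integral_norm (μ := volume.restrict (Ioc (0:ℝ) 1))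
    (F := fun n r => bumpTail n r / (1 - r)) (fun n => (integral_assoc_bump n).1) (by
      refine summable_log_masses.of_nonneg_of_le (fun n => integral_nonneg fun r => norm_nonneg _)
        fun n => ?_
      refine le_trans (le_of_eq ?_) (integral_assoc_bump n).2
      refine setIntegral_congr_fun measurableSet_Ioc fun r hr => ?_
      exact Real.norm_of_nonneg (div_nonneg (bumpTail_nonneg n r) (by linarith [hr.2])))
  have heq : ∀ r ∈ Ioc (0:ℝ) 1, ∑' n, bumpTail n r / (1 - r) = assocW bumpWeight r :=
    fun r hr => ((hasSum_bumpTail hr.2).div_const _).tsum_eq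
  rw [setIntegral_congr_fun measurableSet_Ioc heq] at h
  -- a nonzero Bochner integral forces integrability
  by_contra hni
  rw [integral_undef hni] at h
  have hnn : ∀ n, 0 ≤ ∫ r in Ioc (0:ℝ) 1, bumpTail n r / (1 - r) := fun n =>
    setIntegral_nonneg measurableSet_Ioc fun r hr =>
      div_nonneg (bumpTail_nonneg n r) (by linarith [hr.2])
  have hz := (hasSum_zero_iff_of_nonneg hnn).1 h
  have h1 : ∫ r in Ioc (0:ℝ) 1, bumpTail 1 r / (1 - r) = 0 := congrFun hz 1
  have h2 : ∫ r in Ioc (0:ℝ) (1/2), (1:ℝ) ≤ ∫ r in Ioc (0:ℝ) (1/2), bumpTail 1 r / (1 - r) := by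
    refine setIntegral_mono_on (by simp)
      ((integral_assoc_bump 1).1.mono_set (Ioc_subset_Ioc_right (by norm_num)))
      measurableSet_Ioc fun r hr => ?_
    rw [bumpTail_full 1 (by unfold dist1; norm_num; linarith [hr.2]), le_div_iff₀ (by linarith [hr.2])]
    simp [hr.1.le]
  have h3 : ∫ r in Ioc (0:ℝ) (1/2), bumpTail 1 r / (1 - r)
      ≤ ∫ r in Ioc (0:ℝ) 1, bumpTail 1 r / (1 - r) :=
    setIntegral_mono_set (integral_assoc_bump 1).1
      ((ae_restrict_iff' measurableSet_Ioc).2 (Filter.Eventually.of_forall fun r hr =>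
        div_nonneg (bumpTail_nonneg 1 r) (by linarith [hr.2])))
      (Ioc_subset_Ioc_right (by norm_num)).eventuallyLE
  rw [h1] at h3
  rw [setIntegral_const, Real.volume_real_Ioc] at h2
  norm_num at h2
  linarith

lemma intervalIntegrable_assocW {a b : ℝ} (ha : 0 ≤ a) (hab : a ≤ b) (hb : b ≤ 1) :
    IntervalIntegrable (assocW bumpWeight) volume a b :=
  (intervalIntegrable_iff_integrableOn_Ioc_of_le hab).2
    (integrableOn_assocW.mono_set (Ioc_subset_Ioc ha hb))

lemma assocW_nonneg {r : ℝ} (hr : r ≤ 1) : 0 ≤ assocW bumpWeight r :=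
  div_nonneg (tailInt_nonneg hr) (by linarith)

/-- The long plateau `dist1 (n + 1) ≤ 1 - s ≤ dist1 n / 4`, of logarithmic length
`(6 n + 1) log 2`, contributes at least a multiple of the mass `1 / n!` of the preceding bump. -/
lemma le_tailInt_assocW (n : ℕ) {r : ℝ} (h0 : 0 ≤ r) (hr : r ≤ 1 - dist1 n / 4) :
    Real.log 2 * (1 / n.factorial) ≤ tailInt (assocW bumpWeight) r := by
  have hp := dist1_pos n
  have hp' := dist1_pos (n + 1)
  have hs := dist1_succ_le n
  have hab : 1 - dist1 n / 4 ≤ 1 - dist1 (n + 1) := by linarith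
  have e1 := intervalIntegral.integral_add_adjacent_intervals
    (intervalIntegrable_assocW h0 hr (by linarith))
    (intervalIntegrable_assocW (h0.trans hr) hab (by linarith))
  have e2 := intervalIntegral.integral_add_adjacent_intervals
    (intervalIntegrable_assocW h0 (hr.trans hab) (by linarith))
    (intervalIntegrable_assocW ((h0.trans hr).trans hab) (by linarith : _ ≤ (1:ℝ)) le_rfl)
  have p1 : 0 ≤ ∫ s in r..(1 - dist1 n / 4), assocW bumpWeight s :=
    intervalIntegral.integral_nonneg hr fun s hs => assocW_nonneg (by linarith [hs.2])
  have p2 : 0 ≤ ∫ s in (1 - dist1 (n + 1))..1, assocW bumpWeight s :=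
    intervalIntegral.integral_nonneg (by linarith) fun s hs => assocW_nonneg hs.2
  have p3 : ∫ s in (1 - dist1 n / 4)..(1 - dist1 (n + 1)),
      1 / ((n + 1).factorial : ℝ) * (1 - s)⁻¹
      ≤ ∫ s in (1 - dist1 n / 4)..(1 - dist1 (n + 1)), assocW bumpWeight s := by
    refine intervalIntegral.integral_mono_on hab
      ((intervalIntegrable_inv_one_sub (by linarith) (by linarith)).const_mul _)
      (intervalIntegrable_assocW (h0.trans hr) hab (by linarith)) fun s hs => ?_
    rw [assocW, div_eq_mul_inv]
    exact mul_le_mul_of_nonneg_right (le_tailInt (n + 1) hs.2) (inv_nonneg.2 (by linarith [hs.2]))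
  rw [intervalIntegral.integral_const_mul,
    integral_inv_one_sub (by linarith) (by linarith)] at p3
  have hq : (1 - (1 - dist1 n / 4)) / (1 - (1 - dist1 (n + 1))) = 2 ^ (6 * n + 1) := by
    have : (2:ℝ) ^ (6 * n + 3) = 2 ^ (6 * n + 1) * 4 := by rw [pow_add, pow_add]; norm_num; ring
    rw [sub_sub_cancel, sub_sub_cancel, dist1_succ, one_div, inv_pow, this]
    field_simp
  rw [hq, Real.log_pow] at p3
  have hl : 0 < Real.log 2 := Real.log_pos (by norm_num)
  have hf : (0:ℝ) < n.factorial := by positivity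
  have p4 : Real.log 2 * (1 / n.factorial)
      ≤ 1 / ((n + 1).factorial : ℝ) * (((6 * n + 1 : ℕ) : ℝ) * Real.log 2) := by
    rw [Nat.factorial_succ]
    push_cast
    have : 1 / (((n:ℝ) + 1) * n.factorial) * ((6 * n + 1) * Real.log 2)
        = Real.log 2 * (1 / n.factorial) * ((6 * n + 1) / (n + 1)) := by field_simp
    rw [this]
    refine le_mul_of_one_le_right (by positivity) ?_
    rw [le_div_iff₀ (by positivity)]
    have : (0:ℝ) ≤ n := by positivity
    linarith
  rw [tailInt]
  linarith

lemma dhat_assocW : Dhat (assocW bumpWeight) := by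
  have hl : 0 < Real.log 2 := Real.log_pos (by norm_num)
  have hK : 0 ≤ Real.exp 1 / Real.log 2 := by positivity
  refine ⟨Real.exp 1 / Real.log 2 + 1, by linarith, fun r hr => ?_⟩
  obtain ⟨hr0, hr1⟩ := hr
  have hex : ∃ n, dist1 n / 2 < 1 - r := by
    obtain ⟨n, hn⟩ := exists_dist1_lt (sub_pos.2 hr1)
    exact ⟨n, by linarith [dist1_pos n]⟩
  classical
  -- the first bump that reaches beyond `r`
  obtain ⟨n, hn, hmin⟩ : ∃ n, dist1 n / 2 < 1 - r ∧ ∀ k < n, 1 - dist1 k / 2 ≤ r :=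
    ⟨Nat.find hex, Nat.find_spec hex, fun k hk => by linarith [not_lt.1 (Nat.find_min hex hk)]⟩
  have h1 := tailInt_le n hr1.le hmin
  have h2 := le_tailInt_assocW n (r := (1 + r) / 2) (by linarith) (by linarith)
  have h3 := intervalIntegral.integral_add_adjacent_intervals
    (intervalIntegrable_assocW hr0 (by linarith : r ≤ (1 + r) / 2) (by linarith))
    (intervalIntegrable_assocW (by linarith) (by linarith : (1 + r) / 2 ≤ 1) le_rfl)
  -- on `[r, (1 + r) / 2]` the numerator is at most its value at `r`, and `1 - s ≥ (1 - r) / 2`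
  have h4 : ∫ s in r..((1 + r) / 2), assocW bumpWeight s ≤ tailInt bumpWeight r := by
    have := intervalIntegral.integral_mono_on (by linarith : r ≤ (1 + r) / 2)
      (intervalIntegrable_assocW hr0 (by linarith) (by linarith))
      (intervalIntegrable_const (c := tailInt bumpWeight r / ((1 - r) / 2))) fun s hs =>
        div_le_div₀ (tailInt_nonneg hr1.le) (tailInt_anti hs.1 (by linarith [hs.2]))
          (by linarith) (by linarith [hs.2])
    rw [intervalIntegral.integral_const, smul_eq_mul] at this
    have h1r : 1 - r ≠ 0 := by linarith
    refine this.trans (le_of_eq ?_)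
    rw [show (1 + r) / 2 - r = (1 - r) / 2 by ring]
    field_simp
  have h5 : Real.exp 1 * (1 / n.factorial)
      ≤ Real.exp 1 / Real.log 2 * tailInt (assocW bumpWeight) ((1 + r) / 2) := by
    calc Real.exp 1 * (1 / n.factorial)
        = Real.exp 1 / Real.log 2 * (Real.log 2 * (1 / n.factorial)) := by field_simp
      _ ≤ _ := by gcongr
  change (∫ s in r..((1 + r) / 2), assocW bumpWeight s) + tailInt (assocW bumpWeight) ((1 + r) / 2)
    = tailInt (assocW bumpWeight) r at h3
  linarith

/-- There exists a radial weight `ω ∉ D̂` whose associated function `ω̃` is a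
weight and belongs to `D̂`. -/
theorem statement3 :
    ∃ ω : ℝ → ℝ, RadialWeight ω ∧ ¬ Dhat ω ∧
      MeasureTheory.IntegrableOn (assocW ω) (Set.Ico 0 1) ∧ Dhat (assocW ω) := by
  refine ⟨bumpWeight, radialWeight_bumpWeight, not_dhat_bumpWeight, ?_, dhat_assocW⟩
  rw [integrableOn_Ico_iff_integrableOn_Ioo, ← integrableOn_Ioc_iff_integrableOn_Ioo]
  exact integrableOn_assocW
end
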